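/- arXiv:1806.02767 — 2 statements merged into one kernel-verified Lean document; each statement's English description precedes it below -/
import Mathlib

section
/- Let k be a field of characteristic 0, fix integers r, n ≥ 1, and let e_i(r,n) = e_i(x_1^r,…,x_n^r) be the i-th elementary symmetric polynomial evaluated at the r-th powers of the variables. Then the coinvariant algebra of the complex reflection group G(r,1,n), namely the graded Artinian complete intersection C = k[x_1,…,x_n]/(e_1(r,n),…,e_n(r,n)), is strong Lefschetz: there exists a linear form ℓ ∈ C_1 such that for all i, k ≥ 0 the map ×ℓ^k : C_i → C_{i+k} has maximal rank min(dim_k C_i, dim_k C_{i+k}). -/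
/-- The `i`-th "elementary `r`-symmetric polynomial" `e_i(r,n) = e_i(x_1^r,…,x_n^r)`. -/
noncomputable def esymmPow (k : Type*) [CommRing k] (n r i : ℕ) :
    MvPolynomial (Fin n) k :=
  ∑ s ∈ Finset.powersetCard i (Finset.univ : Finset (Fin n)),
    ∏ j ∈ s, MvPolynomial.X j ^ r

/-- The induced grading on a quotient `k[x_1,…,x_n]/I`: the degree-`i` component is the
image of the space of homogeneous polynomials of degree `i`. -/
noncomputable def quotGrade (k : Type*) [Field k] (n : ℕ)
    (I : Ideal (MvPolynomial (Fin n) k)) (i : ℕ) :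
    Submodule k (MvPolynomial (Fin n) k ⧸ I) :=
  (MvPolynomial.homogeneousSubmodule (Fin n) k i).map (Ideal.Quotient.mkₐ k I).toLinearMap

/-!
Write `d j = r * (n - j) - 1` for `j = 0, …, n - 1`. The monomials dividing `x ^ d` form a basis of
`C`. They span because `x_j ^ (d j + 1)` reduces, through the relation
`h_{n-j}(x_0 ^ r, …, x_j ^ r) = 0`, to monomials of the same degree and strictly smaller weight
`∑ i, i * a i`; they are independent because they are so in a tower of `n` simple extensions, each
splitting off from `T ^ n` a factor `T - x_j ^ r`.

Since the weight drops, rescaling `x_j` to `t ^ j * x_j` puts `C` into a family which depends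
polynomially on `t` and whose fibre at `t = 0` is the monomial complete intersection
`k[x] / (x_j ^ (d j + 1))`. On that fibre `∑ j, x_j` is the raising operator of an `sl₂`-action, so
it is a strong Lefschetz element in characteristic zero. Maximal rank is an open condition on `t`,
and the fibres with `t ≠ 0` are all isomorphic to `C`.
-/

section StrongLefschetz

variable {k V : Type*} [Field k] [AddCommGroup V] [Module k V]

/-- `L` is a strong Lefschetz operator for the grading `G`: each power `L ^ m : G i → G (i + m)` has
maximal rank. That `L` has degree one is not part of the definition. -/
def IsStrongLefschetz (G : ℕ → Submodule k V) (L : Module.End k V) : Prop :=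
  ∀ i m, Module.finrank k ((G i).map (L ^ m)) =
    min (Module.finrank k (G i)) (Module.finrank k (G (i + m)))

variable {G : ℕ → Submodule k V} {L : Module.End k V}

theorem map_pow_le (hL : ∀ i, (G i).map L ≤ G (i + 1)) (i m : ℕ) :
    (G i).map (L ^ m) ≤ G (i + m) := by
  induction m with
  | zero => simp [Module.End.one_eq_id]
  | succ m ih =>
    rw [pow_succ', Module.End.mul_eq_comp, Submodule.map_comp]
    exact (Submodule.map_mono ih).trans (hL (i + m))

theorem finrank_map_pow_add_le [∀ i, FiniteDimensional k (G i)] (i m l : ℕ) :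
    Module.finrank k ((G i).map (L ^ (m + l))) ≤ Module.finrank k ((G i).map (L ^ m)) := by
  rw [pow_add, pow_mul_comm, Module.End.mul_eq_comp, Submodule.map_comp]
  exact Submodule.finrank_map_le _ _

theorem isStrongLefschetz_of_symmetric [∀ i, FiniteDimensional k (G i)] {N : ℕ}
    (hL : ∀ i, (G i).map L ≤ G (i + 1))
    (hsymm : ∀ i ≤ N, Module.finrank k (G (N - i)) = Module.finrank k (G i))
    (hbot : ∀ i, N < i → G i = ⊥)
    (hmid : ∀ i, 2 * i ≤ N →
      Module.finrank k ((G i).map (L ^ (N - 2 * i))) = Module.finrank k (G i)) :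
    IsStrongLefschetz G L := by
  intro i m
  have hle := Submodule.finrank_mono (map_pow_le hL i m)
  refine (le_min (Submodule.finrank_map_le _ _) hle).antisymm ?_
  rcases lt_or_ge N (i + m) with hN | hN
  · rw [hbot _ hN, finrank_bot, min_eq_right (Nat.zero_le _)]
    exact Nat.zero_le _
  rcases le_total (2 * i + m) N with him | him
  · obtain ⟨l, hl⟩ := Nat.exists_eq_add_of_le (show m ≤ N - 2 * i by omega)
    calc _ ≤ Module.finrank k (G i) := min_le_left _ _
      _ = Module.finrank k ((G i).map (L ^ (m + l))) := by rw [← hl, hmid i (by omega)]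
      _ ≤ _ := finrank_map_pow_add_le i m l
  · set j := N - (i + m) with hj
    obtain ⟨l, hl⟩ := Nat.exists_eq_add_of_le (show j ≤ i by omega)
    calc _ ≤ Module.finrank k (G (i + m)) := min_le_right _ _
      _ = Module.finrank k ((G j).map (L ^ (N - 2 * j))) := by
        rw [hmid j (by omega), hj, hsymm _ hN]
      _ = Module.finrank k (((G j).map (L ^ l)).map (L ^ m)) := by
        rw [← Submodule.map_comp, ← Module.End.mul_eq_comp, ← pow_add,
          show m + l = N - 2 * j by omega]
      _ ≤ _ := Submodule.finrank_mono (Submodule.map_mono (hl ▸ map_pow_le hL j l))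

end StrongLefschetz

section Semicontinuity

theorem exists_mul_eq_one_of_linearIndependent_row {k ι κ : Type*} [Field k] [Finite ι]
    [DecidableEq ι] [Fintype κ] {M : Matrix ι κ k} (h : LinearIndependent k M.row) :
    ∃ B : Matrix κ ι k, M * B = 1 := by
  cases nonempty_fintype ι
  exact Matrix.mulVec_surjective_iff_exists_right_inverse.mp <| LinearMap.range_eq_top.mp <|
    Submodule.eq_top_of_finrank_eq <|
      h.rank_matrix.trans (Module.finrank_fintype_fun_eq_card k).symm

open Polynomial in
theorem eventually_linearIndependent_eval {k ι κ : Type*} [Field k] [Finite ι] [Finite κ]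
    (v : ι → κ → k[X]) (t₀ : k) (h : LinearIndependent k fun i c => (v i c).eval t₀) :
    ∀ᶠ t in Filter.cofinite, LinearIndependent k fun i c => (v i c).eval t := by
  classical
  cases nonempty_fintype ι
  cases nonempty_fintype κ
  let M (t : k) : Matrix ι κ k := Matrix.of fun i c => (v i c).eval t
  obtain ⟨B, hB⟩ := exists_mul_eq_one_of_linearIndependent_row (M := M t₀) h
  let Δ : k[X] := (Matrix.of v * B.map C).det
  have hΔ (t : k) : Δ.eval t = (M t * B).det := by
    rw [← coe_evalRingHom, RingHom.map_det, RingHom.mapMatrix_apply, Matrix.map_mul]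
    congr
    ext
    simp
  have hΔ₀ : Δ ≠ 0 := fun h0 => by simpa [h0, hB] using hΔ t₀
  filter_upwards [(finite_setOfPred_isRoot hΔ₀).compl_mem_cofinite] with t ht
  have hrow : LinearIndependent k (M t * B).row :=
    Matrix.linearIndependent_rows_of_det_ne_zero (hΔ t ▸ ht)
  rw [← Matrix.vecMul_injective_iff] at hrow
  refine Matrix.vecMul_injective_iff (M := M t).mp
    (Function.Injective.of_comp (f := fun x => Matrix.vecMul x B) ?_)
  simpa only [Function.comp_def, Matrix.vecMul_vecMul] using hrow

end Semicontinuity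

section Vieta

open Polynomial Finset

variable {R ι : Type*} [CommRing R]

theorem prod_mk_pow_mul_prod_one_sub (y : ι → R) (s : Finset ι) :
    (∏ j ∈ s, PowerSeries.mk (y j ^ ·)) * ((∏ j ∈ s, (1 - C (y j) * X) : R[X]) : PowerSeries R) =
      1 := by
  rw [← coeToPowerSeries.ringHom_apply, map_prod, ← prod_mul_distrib]
  refine prod_eq_one fun j _ => ?_
  simpa [PowerSeries.rescale_mk, PowerSeries.rescale_X] using
    congrArg (PowerSeries.rescale (y j)) (PowerSeries.mk_one_mul_one_sub_eq_one R)

variable [Fintype ι] {y : ι → R}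

theorem sum_powersetCard_prod_eq_zero_of_prod_X_sub_C
    (hy : ∏ j, (X - C (y j)) = X ^ Fintype.card ι) {i : ℕ} (hi : i < Fintype.card ι) :
    ∑ t ∈ powersetCard (i + 1) univ, ∏ j ∈ t, y j = 0 := by
  have hcoeff := Multiset.prod_X_sub_C_coeff (univ.val.map y)
    (k := Fintype.card ι - (i + 1)) (by simp)
  rw [Multiset.map_map, Multiset.card_map, card_val, card_univ, esymm_map_val,
    Nat.sub_sub_self hi] at hcoeff
  replace hcoeff := hcoeff.symm.trans (congrArg (coeff · (Fintype.card ι - (i + 1))) hy)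
  rw [coeff_X_pow, if_neg (by omega)] at hcoeff
  exact (IsUnit.mul_right_eq_zero (isUnit_one.neg.pow _)).mp hcoeff

theorem prod_one_sub_C_mul_X_eq_one
    (hy : ∀ i < Fintype.card ι, ∑ t ∈ powersetCard (i + 1) univ, ∏ j ∈ t, y j = 0) :
    ∏ j, (1 - C (y j) * X) = 1 := by
  have hterm (i : ℕ) : ∑ t ∈ powersetCard i univ, ∏ j ∈ t, -(C (y j) * X) =
      C (∑ t ∈ powersetCard i univ, ∏ j ∈ t, y j) * (-X) ^ i := by
    rw [map_sum, sum_mul]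
    refine sum_congr rfl fun t ht => ?_
    simp only [← mul_neg, prod_mul_distrib, prod_const, (mem_powersetCard.mp ht).2, map_prod]
  simp only [sub_eq_add_neg]
  rw [prod_one_add, sum_powerset, sum_range_succ', sum_eq_zero]
  · simp
  · intro i hi
    rw [hterm, hy i (mem_range.mp hi), map_zero, zero_mul]

theorem sum_finsuppAntidiag_prod_pow_eq_zero [DecidableEq ι]
    (hy : ∀ i < Fintype.card ι, ∑ t ∈ powersetCard (i + 1) univ, ∏ j ∈ t, y j = 0)
    {s : Finset ι} {u : ℕ} (hs : Fintype.card ι < #s + u) :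
    ∑ l ∈ s.finsuppAntidiag u, ∏ j ∈ s, y j ^ l j = 0 := by
  have hcompl : ∏ j ∈ s, PowerSeries.mk (y j ^ ·) =
      ((∏ j ∈ sᶜ, (1 - C (y j) * X) : R[X]) : PowerSeries R) := by
    refine left_inv_eq_right_inv (prod_mk_pow_mul_prod_one_sub y s) ?_
    rw [← Polynomial.coe_mul, prod_mul_prod_compl,
      prod_one_sub_C_mul_X_eq_one hy, Polynomial.coe_one]
  have hdeg : (∏ j ∈ sᶜ, (1 - C (y j) * X)).natDegree < u := by
    calc _ ≤ ∑ j ∈ sᶜ, (1 - C (y j) * X).natDegree := natDegree_prod_le _ _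
      _ ≤ #sᶜ • 1 := sum_le_card_nsmul _ _ _ fun j _ => by compute_degree
      _ < u := by
        rw [card_compl, smul_eq_mul]
        have := card_le_univ s
        omega
  calc _ = PowerSeries.coeff u (∏ j ∈ s, PowerSeries.mk (y j ^ ·)) := by
        simp [PowerSeries.coeff_prod]
    _ = 0 := by rw [hcompl, coeff_coe, coeff_eq_zero_of_natDegree_lt hdeg]

end Vieta

section RootTower

universe u

open Polynomial

theorem exists_linearIndependent_pow_of_X_sub_C_mul {R : Type u} [CommRing R] {r n : ℕ}
    (hr : 1 ≤ r) {g : R[X]} (hg : g.Monic) (hn : g.natDegree = n + 1) :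
    ∃ (S : Type u) (_ : CommRing S) (_ : Algebra R S) (x : S) (g' : S[X]),
      g'.Monic ∧ g'.natDegree = n ∧ (X - C (x ^ r)) * g' = g.map (algebraMap R S) ∧
        LinearIndependent R fun a : Fin (r * (n + 1)) => x ^ (a : ℕ) := by
  have hG : (expand R r g).Monic := hg.expand (by omega)
  let x := AdjoinRoot.root (expand R r g)
  have hli : LinearIndependent R fun a : Fin (r * (n + 1)) => x ^ (a : ℕ) := by
    rw [mul_comm r, ← hn, ← natDegree_expand]
    exact PowerBasis.coe_basis (AdjoinRoot.powerBasis' hG) ▸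
      (AdjoinRoot.powerBasis' hG).basis.linearIndependent
  have : Nontrivial R := by
    by_contra! hR
    simp [Subsingleton.elim g 0] at hn
  have : Nontrivial (AdjoinRoot (expand R r g)) :=
    ⟨x ^ 0, 0, hli.ne_zero ⟨0, Nat.mul_pos hr n.succ_pos⟩⟩
  have hroot : (g.map (algebraMap R _)).IsRoot (x ^ r) := by
    rw [IsRoot, eval_map_algebraMap, ← expand_aeval, AdjoinRoot.aeval_eq, AdjoinRoot.mk_self]
  obtain ⟨g', hg'⟩ := dvd_iff_isRoot.mpr hroot
  have hmonic : g'.Monic := (monic_X_sub_C _).of_mul_monic_left (hg' ▸ hg.map _)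
  refine ⟨_, inferInstance, inferInstance, x, g', hmonic, ?_, hg'.symm, hli⟩
  have hdeg := congrArg natDegree hg'
  rw [(monic_X_sub_C _).natDegree_mul hmonic, natDegree_X_sub_C, hg.natDegree_map, hn] at hdeg
  omega

theorem exists_linearIndependent_prod_pow {r : ℕ} (hr : 1 ≤ r) {R : Type u} [CommRing R] {g : R[X]}
    (hg : g.Monic) {n : ℕ} (hn : g.natDegree = n) :
    ∃ (D : Type u) (_ : CommRing D) (_ : Algebra R D) (x : Fin n → D),
      ∏ j, (X - C (x j ^ r)) = g.map (algebraMap R D) ∧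
      LinearIndependent R fun a : (j : Fin n) → Fin (r * (n - j)) => ∏ j, x j ^ (a j : ℕ) := by
  induction n generalizing R with
  | zero =>
    refine ⟨R, inferInstance, inferInstance, Fin.elim0, ?_, ?_⟩
    · simp [hg.natDegree_eq_zero.mp hn]
    · exact .of_subsingleton' (fun j => j.elim0) fun c hc => by simpa using hc
  | succ n ih =>
    obtain ⟨S, _, _, x₀, g', hmonic, hdeg, hg', hli₀⟩ :=
      exists_linearIndependent_pow_of_X_sub_C_mul hr hg hn
    obtain ⟨D, _, _, x, hx, hli⟩ := ih hmonic hdeg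
    let : Algebra R D := Algebra.compHom D (algebraMap R S)
    have : IsScalarTower R S D := .of_algebraMap_eq' rfl
    refine ⟨D, inferInstance, inferInstance, Fin.cons (algebraMap S D x₀) x, ?_, ?_⟩
    · rw [IsScalarTower.algebraMap_eq R S D, ← Polynomial.map_map, ← hg', Fin.prod_univ_succ]
      simp [← hx]
    · let split (a : (j : Fin (n + 1)) → Fin (r * (n + 1 - j))) :
          Fin (r * (n + 1)) × ((j : Fin n) → Fin (r * (n - j))) :=
        (a 0, fun j => (a j.succ).cast (by simp))
      have hsplit : Function.Injective split := fun a b hab => by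
        obtain ⟨h₀, hs⟩ := Prod.mk.inj hab
        exact funext (Fin.cases h₀ fun j => Fin.cast_injective _ (congrFun hs j))
      convert (linearIndependent_smul hli₀ hli).comp split hsplit using 2 with a
      simp [Fin.prod_univ_succ, split, Algebra.smul_def]

end RootTower

/-- `E` and `F` are the raising and lowering operators of an `sl₂`-action on the graded space
`⨁ G i`, whose element `[E, F]` acts on `G i` as the scalar `2 * i - N`. -/
structure IsGradedSl2Pair {k V : Type*} [Field k] [AddCommGroup V] [Module k V]
    (E F : Module.End k V) (G : ℕ → Submodule k V) (N : ℕ) : Prop where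
  raise_mem {i : ℕ} {v : V} : v ∈ G i → E v ∈ G (i + 1)
  lower_mem {i : ℕ} {v : V} : v ∈ G (i + 1) → F v ∈ G i
  lower_eq_zero {v : V} : v ∈ G 0 → F v = 0
  lower_raise {i : ℕ} {v : V} : v ∈ G i → F (E v) = E (F v) + ((N : k) - 2 * i) • v

namespace IsGradedSl2Pair

variable {k V : Type*} [Field k] [AddCommGroup V] [Module k V]
  {E F : Module.End k V} {G : ℕ → Submodule k V} {J : Submodule k V} {N i : ℕ} {v : V}

theorem raise_lower_mem (h : IsGradedSl2Pair E F G N) (hv : v ∈ G i) : E (F v) ∈ G i := by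
  cases i with
  | zero => simp [h.lower_eq_zero hv]
  | succ i => exact h.raise_mem (h.lower_mem hv)

theorem raise_pow_mem (h : IsGradedSl2Pair E F G N) (hv : v ∈ G i) (m : ℕ) :
    (E ^ m) v ∈ G (i + m) := by
  induction m with
  | zero => simpa using hv
  | succ m ih => simpa [pow_succ', ← add_assoc] using h.raise_mem ih

theorem lower_raise_pow_succ (h : IsGradedSl2Pair E F G N) (hv : v ∈ G i) (m : ℕ) :
    F ((E ^ (m + 1)) v) = (E ^ m) (E (F v) + (((m : k) + 1) * (N - 2 * i - m)) • v) := by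
  induction m with
  | zero => simpa using h.lower_raise hv
  | succ m ih =>
    have hE : (E ^ (m + 1)) v ∈ G (i + (m + 1)) := h.raise_pow_mem hv (m + 1)
    rw [pow_succ' E (m + 1), Module.End.mul_apply, h.lower_raise hE, ih]
    simp only [pow_succ' E m, Module.End.mul_apply, map_add, map_smul]
    rw [add_assoc, ← add_smul]
    push_cast
    ring_nf

variable [CharZero k]

theorem mem_of_raise_lower_add_smul_mem (h : IsGradedSl2Pair E F G N)
    (hE : J ∈ E.invtSubmodule) (hF : J ∈ F.invtSubmodule) (hi : 2 * i ≤ N) {c : ℕ} (hc : c ≠ 0)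
    (hv : v ∈ G i) (hJ : E (F v) + (c : k) • v ∈ J) : v ∈ J := by
  have hc' : (c : k) ≠ 0 := Nat.cast_ne_zero.mpr hc
  induction i generalizing c v with
  | zero =>
    rw [h.lower_eq_zero hv, map_zero, zero_add] at hJ
    exact (J.smul_mem_iff hc').mp hJ
  | succ i ih =>
    have hFv : F v ∈ J := by
      refine ih (c := N - 2 * i + c) (by omega) (by omega) (h.lower_mem hv) ?_
        (Nat.cast_ne_zero.mpr (by omega))
      have hFJ : F (E (F v) + (c : k) • v) ∈ J := hF hJ
      rwa [map_add, map_smul, h.lower_raise (h.lower_mem hv), add_assoc, ← add_smul,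
        show (N : k) - 2 * i + c = (N - 2 * i + c : ℕ) by
          push_cast [Nat.cast_sub (show 2 * i ≤ N by omega)]; rfl] at hFJ
    exact (J.smul_mem_iff hc').mp ((J.add_mem_iff_right (hE hFv)).mp hJ)

theorem mem_of_raise_pow_mem (h : IsGradedSl2Pair E F G N)
    (hE : J ∈ E.invtSubmodule) (hF : J ∈ F.invtSubmodule) {m : ℕ} (hm : 2 * i + m ≤ N)
    (hv : v ∈ G i) (hJ : (E ^ m) v ∈ J) : v ∈ J := by
  induction m generalizing v with
  | zero => simpa using hJ
  | succ m ih =>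
    have hFJ : F ((E ^ (m + 1)) v) ∈ J := hF hJ
    rw [h.lower_raise_pow_succ hv, show ((m : k) + 1) * (N - 2 * i - m) =
      ((m + 1) * (N - (2 * i + m)) : ℕ) by
        push_cast [Nat.cast_sub (show 2 * i + m ≤ N by omega)]; ring] at hFJ
    refine h.mem_of_raise_lower_add_smul_mem hE hF (by omega)
      (Nat.mul_ne_zero m.succ_ne_zero (by omega)) hv
      (ih (by omega) (add_mem (h.raise_lower_mem hv) (Submodule.smul_mem _ _ hv)) hFJ)

end IsGradedSl2Pair

section MonomialCompleteIntersection

open MvPolynomial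

variable {R σ : Type*} [CommRing R] {d : σ →₀ ℕ}

/-- The ideal `(x_j ^ (d j + 1))` of the monomial complete intersection with socle monomial
`x ^ d`. -/
noncomputable def powersIdeal (R : Type*) [CommRing R] {σ : Type*} (d : σ →₀ ℕ) :
    Ideal (MvPolynomial σ R) :=
  Ideal.span (Set.range fun j => X j ^ (d j + 1))

theorem mem_powersIdeal_iff {p : MvPolynomial σ R} :
    p ∈ powersIdeal R d ↔ ∀ a ∈ p.support, ¬ a ≤ d := by
  have hrange : (Set.range fun j => (X j : MvPolynomial σ R) ^ (d j + 1)) =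
      (fun a => monomial a 1) '' Set.range fun j => Finsupp.single j (d j + 1) := by
    rw [← Set.range_comp]
    simp only [Function.comp_def, X_pow_eq_monomial]
  rw [powersIdeal, hrange, mem_ideal_span_monomial_image]
  simp only [Set.exists_range_iff, Finsupp.single_le_iff, Nat.add_one_le_iff]
  simp only [Finsupp.le_def, not_forall, not_le]

theorem pderiv_eq_zero_of_isHomogeneous_zero {p : MvPolynomial σ R} (hp : p.IsHomogeneous 0)
    (j : σ) : pderiv j p = 0 := by
  rw [totalDegree_eq_zero_iff_eq_C.mp (Nat.le_zero.mp hp.totalDegree_le), pderiv_C]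

variable [Fintype σ]

/-- The operator `∑ j, (d j * ∂_j - x_j * ∂_j ^ 2)`, which together with multiplication by
`∑ j, x_j` gives an `sl₂`-action on polynomials that preserves `powersIdeal R d`. -/
noncomputable def lowering (R : Type*) [CommRing R] (d : σ →₀ ℕ) :
    Module.End R (MvPolynomial σ R) :=
  ∑ j, (d j • (pderiv j).toLinearMap -
    LinearMap.mulLeft R (X j) ∘ₗ (pderiv j).toLinearMap ∘ₗ (pderiv j).toLinearMap)

theorem lowering_apply (p : MvPolynomial σ R) :
    lowering R d p =
      ∑ j, ((d j : MvPolynomial σ R) * pderiv j p - X j * pderiv j (pderiv j p)) := by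
  simp [lowering, -Finset.sum_sub_distrib]

theorem lowering_X_mul (i : σ) (p : MvPolynomial σ R) :
    lowering R d (X i * p) =
      X i * lowering R d p + ((d i : MvPolynomial σ R) * p - 2 * (X i * pderiv i p)) := by
  classical
  simp only [lowering_apply, Finset.mul_sum]
  rw [← Finset.add_sum_erase _ _ (Finset.mem_univ i),
    ← Finset.add_sum_erase _ _ (Finset.mem_univ i), add_right_comm]
  congr 1
  · simp only [Derivation.leibniz, pderiv_X_self, smul_eq_mul, map_add, mul_one]
    ring
  · refine Finset.sum_congr rfl fun j hj => ?_
    have hX : pderiv j (X i : MvPolynomial σ R) = 0 :=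
      pderiv_X_of_ne (Finset.ne_of_mem_erase hj).symm
    simp only [Derivation.leibniz, hX, smul_eq_mul, mul_zero, add_zero]
    ring

theorem lowering_X_pow_succ_mul (i : σ) (m : ℕ) (p : MvPolynomial σ R) :
    lowering R d (X i ^ (m + 1) * p) = X i ^ (m + 1) * lowering R d p +
      ((m + 1) * (d i - m) : MvPolynomial σ R) * (X i ^ m * p) -
        (2 * (m + 1) : MvPolynomial σ R) * (X i ^ (m + 1) * pderiv i p) := by
  induction m with
  | zero =>
    simp only [zero_add, pow_one, pow_zero, Nat.cast_zero, sub_zero, one_mul, mul_one,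
      lowering_X_mul]
    ring
  | succ m ih =>
    rw [pow_succ' _ (m + 1), mul_assoc, lowering_X_mul, ih]
    simp only [Derivation.leibniz, Derivation.leibniz_pow, pderiv_X_self, smul_eq_mul, nsmul_eq_mul,
      Nat.add_sub_cancel, mul_one]
    push_cast
    ring

theorem lowering_sum_X_mul {i : ℕ} {p : MvPolynomial σ R} (hp : p.IsHomogeneous i) :
    lowering R d ((∑ j, X j) * p) =
      (∑ j, X j) * lowering R d p + ((d.degree : R) - 2 * i) • p := by
  simp only [Finset.sum_mul, map_sum, lowering_X_mul, Finset.sum_add_distrib,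
    Finset.sum_sub_distrib, ← Finset.mul_sum, hp.sum_X_mul_pderiv]
  simp only [Finsupp.degree_eq_sum, sub_smul, smul_eq_C_mul, nsmul_eq_mul, ← Finset.sum_mul]
  simp [mul_assoc, map_ofNat]

theorem lowering_mem_powersIdeal {p : MvPolynomial σ R} (hp : p ∈ powersIdeal R d) :
    lowering R d p ∈ powersIdeal R d := by
  obtain ⟨q, rfl⟩ := Ideal.mem_span_range_iff_exists_fun.mp hp
  have hX (j : σ) : (X j : MvPolynomial σ R) ^ (d j + 1) ∈ powersIdeal R d :=
    Ideal.subset_span ⟨j, rfl⟩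
  rw [map_sum]
  refine sum_mem fun j _ => ?_
  rw [mul_comm, lowering_X_pow_succ_mul, sub_self, mul_zero, zero_mul, add_zero]
  exact sub_mem (Ideal.mul_mem_right _ _ (hX j))
    (Ideal.mul_mem_left _ _ (Ideal.mul_mem_right _ _ (hX j)))

theorem isHomogeneous_lowering {i : ℕ} {p : MvPolynomial σ R} (hp : p.IsHomogeneous (i + 1)) :
    (lowering R d p).IsHomogeneous i := by
  rw [lowering_apply]
  refine IsHomogeneous.sum _ _ _ fun j _ => ?_
  have hd : (pderiv j p).IsHomogeneous i := hp.pderiv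
  refine .sub (by simpa using hd.C_mul (d j : R)) ?_
  cases i with
  | zero => simpa [pderiv_eq_zero_of_isHomogeneous_zero hd] using isHomogeneous_zero σ R 0
  | succ i => simpa [add_comm] using (isHomogeneous_X R j).mul hd.pderiv

theorem isGradedSl2Pair_lowering (k : Type*) [Field k] {σ : Type*} [Fintype σ] (d : σ →₀ ℕ) :
    IsGradedSl2Pair (LinearMap.mulLeft k (∑ j, X j)) (lowering k d) (homogeneousSubmodule σ k)
      d.degree where
  raise_mem hp := by
    simpa [add_comm] using (IsHomogeneous.sum _ _ _ fun j _ => isHomogeneous_X k j).mul hp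
  lower_mem hp := isHomogeneous_lowering hp
  lower_eq_zero hp := by
    simp [lowering_apply, pderiv_eq_zero_of_isHomogeneous_zero hp]
  lower_raise hp := lowering_sum_X_mul hp

theorem mem_powersIdeal_of_sum_X_pow_mul_mem {k : Type*} [Field k] [CharZero k] {σ : Type*}
    [Fintype σ] {d : σ →₀ ℕ} {i m : ℕ} (hm : 2 * i + m ≤ d.degree) {p : MvPolynomial σ k}
    (hp : p.IsHomogeneous i) (h : (∑ j, X j) ^ m * p ∈ powersIdeal k d) : p ∈ powersIdeal k d := by
  refine (isGradedSl2Pair_lowering k d).mem_of_raise_pow_mem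
    (J := (powersIdeal k d).restrictScalars k) (fun p hp => Ideal.mul_mem_left _ _ hp)
    (fun p hp => lowering_mem_powersIdeal hp) hm hp ?_
  rwa [LinearMap.pow_mulLeft]

end MonomialCompleteIntersection

section Degeneration

open MvPolynomial

variable {σ k A : Type*} [Field k] [CommRing A] [Algebra k A]

/-- The exponents of the monomials of the same degree as `x_j ^ (d j + 1)` and of strictly smaller
`w`-weight. -/
def lowerMonomials (w : σ → ℕ) (d : σ →₀ ℕ) (j : σ) : Set (σ →₀ ℕ) :=
  {b | b.degree = d j + 1 ∧ Finsupp.weight w b < (d j + 1) * w j}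

/-- In the image of `π`, each power `x_j ^ (d j + 1)` can be rewritten in terms of monomials of the
same degree and strictly smaller `w`-weight. -/
def HasLowerReduction (π : MvPolynomial σ k →ₐ[k] A) (w : σ → ℕ) (d : σ →₀ ℕ) : Prop :=
  ∀ j, π (X j ^ (d j + 1)) ∈ (restrictSupport k (lowerMonomials w d j)).map π.toLinearMap

/-- The composite of `π` with the torus action `x_j ↦ t ^ w j * x_j`. At `t = 0` it does not see the
degenerate fibre, which is reached only through normal forms (see `IsNormalForm`). -/
noncomputable def weightedScaling (π : MvPolynomial σ k →ₐ[k] A) (w : σ → ℕ) (t : k) :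
    MvPolynomial σ k →ₐ[k] A :=
  aeval fun j => t ^ w j • π (X j)

variable {π : MvPolynomial σ k →ₐ[k] A} {w : σ → ℕ} {d : σ →₀ ℕ}

theorem weightedScaling_monomial (t : k) (a : σ →₀ ℕ) :
    weightedScaling π w t (monomial a 1) = t ^ Finsupp.weight w a • π (monomial a 1) := by
  rw [weightedScaling, aeval_monomial, monomial_eq, map_mul, Finsupp.weight_apply]
  simp only [Finsupp.prod, Finsupp.sum, map_one, one_mul, map_prod, map_pow, smul_pow, ← pow_mul,
    smul_eq_mul, ← Finset.prod_pow_eq_pow_sum, Finset.prod_smul, mul_comm]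

@[simp] theorem weightedScaling_one : weightedScaling π w 1 = π := by
  ext; simp [weightedScaling]

theorem HasLowerReduction.exists_weightedScaling_X_pow (h : HasLowerReduction π w d)
    (j : σ) :
    ∃ q ∈ restrictSupport k (lowerMonomials w d j), ∀ t,
      weightedScaling π w t (X j ^ (d j + 1)) = ∑ b ∈ q.support,
        (t ^ ((d j + 1) * w j - Finsupp.weight w b) * coeff b q) •
          weightedScaling π w t (monomial b 1) := by
  obtain ⟨q, hq, hπ⟩ := h j
  refine ⟨q, hq, fun t => ?_⟩
  rw [X_pow_eq_monomial, weightedScaling_monomial, ← X_pow_eq_monomial, Finsupp.weight_single,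
    ← hπ, AlgHom.toLinearMap_apply]
  conv_lhs => rw [q.as_sum, map_sum, Finset.smul_sum]
  refine Finset.sum_congr rfl fun b hb => ?_
  have hb := ((mem_restrictSupport_iff k).mp hq hb).2
  rw [weightedScaling_monomial, ← mul_one (coeff b q), ← smul_eq_mul (coeff b q),
    ← smul_monomial, map_smul, smul_smul, smul_smul, smul_eq_mul, smul_eq_mul, mul_one,
    mul_right_comm, ← pow_add, Nat.sub_add_cancel hb.le]

open scoped Classical in
/-- `v` expands the image of the monomial `x ^ a` under each `weightedScaling π w t` in terms of
the monomials dividing `x ^ d`, with coefficients polynomial in `t`. At `t = 0` they are those of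
`x ^ a` in the monomial complete intersection `k[x] / (x_j ^ (d j + 1))`. -/
structure IsNormalForm (π : MvPolynomial σ k →ₐ[k] A) (w : σ → ℕ) {d : σ →₀ ℕ}
    (a : σ →₀ ℕ) (v : Set.Iic d → Polynomial k) : Prop where
  degree_eq {c : Set.Iic d} : v c ≠ 0 → c.1.degree = a.degree
  eval_zero (c : Set.Iic d) : (v c).eval 0 = coeff c (monomial a 1)
  weightedScaling_eq (t : k) : weightedScaling π w t (monomial a 1) =
    ∑ c, (v c).eval t • weightedScaling π w t (monomial c 1)

namespace IsNormalForm

open scoped Classical in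
theorem of_mem (c : Set.Iic d) : IsNormalForm π w c (Pi.single c 1) where
  degree_eq {e} he := by
    obtain rfl : e = c := by
      by_contra hne
      exact he (Pi.single_eq_of_ne hne 1)
    rfl
  eval_zero e := by
    simp only [Pi.single_apply, coeff_monomial, Subtype.ext_iff, eq_comm (a := c.1)]
    split_ifs <;> simp
  weightedScaling_eq t := by simp [Pi.single_apply, apply_ite (Polynomial.eval t), ite_smul]

theorem single_add {j : σ} {a : σ →₀ ℕ} {q : MvPolynomial σ k}
    (hq : q ∈ restrictSupport k (lowerMonomials w d j))
    (hscale : ∀ t, weightedScaling π w t (X j ^ (d j + 1)) = ∑ b ∈ q.support,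
      (t ^ ((d j + 1) * w j - Finsupp.weight w b) * coeff b q) •
        weightedScaling π w t (monomial b 1))
    {v : q.support → Set.Iic d → Polynomial k} (hv : ∀ b, IsNormalForm π w (b.1 + a) (v b)) :
    IsNormalForm π w (Finsupp.single j (d j + 1) + a) (∑ b : q.support,
      Polynomial.monomial ((d j + 1) * w j - Finsupp.weight w b.1) (coeff b.1 q) • v b) := by
  classical
  replace hq := (mem_restrictSupport_iff k).mp hq
  refine ⟨fun {c} hc => ?_, fun c => ?_, fun t => ?_⟩
  · rw [Finset.sum_apply] at hc
    obtain ⟨b, -, hb⟩ := Finset.exists_ne_zero_of_sum_ne_zero hc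
    rw [(hv b).degree_eq (right_ne_zero_of_mul hb), map_add, map_add, Finsupp.degree_single,
      (hq b.2).1]
  · have hne : Finsupp.single j (d j + 1) + a ≠ c := fun hac => by
      have hle : d j + 1 ≤ d j := Finsupp.single_le_iff.mp ((le_self_add.trans_eq hac).trans c.2)
      omega
    rw [coeff_monomial, if_neg hne, Finset.sum_apply, Polynomial.eval_finsetSum]
    refine Finset.sum_eq_zero fun b _ => ?_
    have hpos : (d j + 1) * w j - Finsupp.weight w b.1 ≠ 0 := Nat.sub_ne_zero_of_lt (hq b.2).2
    simp [Polynomial.eval_monomial, zero_pow hpos]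
  · rw [← mul_one (1 : k), ← monomial_mul, map_mul, ← X_pow_eq_monomial, hscale, Finset.sum_mul,
      ← Finset.sum_coe_sort]
    simp only [smul_mul_assoc, ← map_mul, monomial_mul, mul_one, (hv _).weightedScaling_eq,
      Finset.smul_sum, Finset.sum_apply, Polynomial.eval_finsetSum, Pi.smul_apply, smul_eq_mul,
      Polynomial.eval_mul, Polynomial.eval_monomial, Finset.sum_smul, smul_smul]
    rw [Finset.sum_comm]
    simp only [mul_comm (coeff _ q)]

end IsNormalForm

namespace HasLowerReduction

theorem exists_isNormalForm (h : HasLowerReduction π w d) (a : σ →₀ ℕ) :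
    ∃ v : Set.Iic d → Polynomial k, IsNormalForm π w a v := by
  induction hW : Finsupp.weight w a using Nat.strong_induction_on generalizing a with
  | _ W ih =>
  by_cases ha : a ≤ d
  · exact ⟨_, IsNormalForm.of_mem ⟨a, ha⟩⟩
  obtain ⟨j, hj⟩ : ∃ j, d j < a j := by
    simpa only [Finsupp.le_def, not_forall, not_le] using ha
  obtain ⟨a, rfl⟩ : ∃ a', a = Finsupp.single j (d j + 1) + a' :=
    exists_add_of_le (Finsupp.single_le_iff.mpr hj)
  obtain ⟨q, hq, hscale⟩ := h.exists_weightedScaling_X_pow j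
  have hlt (b : q.support) : Finsupp.weight w (b.1 + a) < W := by
    rw [← hW, map_add, map_add, Finsupp.weight_single]
    exact Nat.add_lt_add_right ((mem_restrictSupport_iff k).mp hq b.2).2 _
  choose v hv using fun b : q.support => ih _ (hlt b) (b.1 + a) rfl
  exact ⟨_, IsNormalForm.single_add hq hscale hv⟩

open scoped Classical in
theorem exists_linearMap_normalForm (h : HasLowerReduction π w d) :
    ∃ ρ : MvPolynomial σ k →ₗ[k] Set.Iic d → Polynomial k,
      (∀ p c, (ρ p c).eval 0 = coeff c p) ∧
      ∀ t p, weightedScaling π w t p =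
        ∑ c, (ρ p c).eval t • weightedScaling π w t (monomial c 1) := by
  choose v hv using h.exists_isNormalForm
  let ρ := (basisMonomials σ k).constr k v
  have hρ (a : σ →₀ ℕ) : ρ (monomial a 1) = v a := by
    simpa only [coe_basisMonomials] using (basisMonomials σ k).constr_basis k v a
  refine ⟨ρ, fun p c => ?_, fun t p => ?_⟩
  · have hlin : Polynomial.leval 0 ∘ₗ LinearMap.proj c ∘ₗ ρ = lcoeff k c.1 :=
      (basisMonomials σ k).ext fun a => by simpa [hρ] using (hv a).eval_zero c
    exact LinearMap.congr_fun hlin p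
  · have hlin : (weightedScaling π w t).toLinearMap =
        Fintype.linearCombination k (fun c : Set.Iic d => weightedScaling π w t (monomial c 1)) ∘ₗ
          LinearMap.pi (fun c => Polynomial.leval t ∘ₗ LinearMap.proj c) ∘ₗ ρ :=
      (basisMonomials σ k).ext fun a => by
        simp [hρ, (hv a).weightedScaling_eq, Fintype.linearCombination_apply]
    simpa [Fintype.linearCombination_apply] using LinearMap.congr_fun hlin p

end HasLowerReduction

/-- The exponents of the degree-`i` monomials dividing `x ^ d`. -/
def boxMonomials (d : σ →₀ ℕ) (i : ℕ) : Set (σ →₀ ℕ) :=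
  {a | a ≤ d ∧ a.degree = i}

instance (i : ℕ) : Finite (boxMonomials d i) := by
  classical exact (Set.finite_Iic d).subset fun _ ha => ha.1

theorem card_boxMonomials_sub {i : ℕ} (hi : i ≤ d.degree) :
    Nat.card (boxMonomials d (d.degree - i)) = Nat.card (boxMonomials d i) := by
  have hdeg {a : σ →₀ ℕ} (ha : a ≤ d) : (d - a).degree + a.degree = d.degree := by
    rw [← map_add, tsub_add_cancel_of_le ha]
  exact Nat.card_congr
    { toFun := fun a => ⟨d - a.1, tsub_le_self, by have := hdeg a.2.1; have := a.2.2; omega⟩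
      invFun := fun a => ⟨d - a.1, tsub_le_self, by have := hdeg a.2.1; have := a.2.2; omega⟩
      left_inv := fun a => Subtype.ext (tsub_tsub_cancel_of_le a.2.1)
      right_inv := fun a => Subtype.ext (tsub_tsub_cancel_of_le a.2.1) }

theorem boxMonomials_eq_empty {i : ℕ} (hi : d.degree < i) : boxMonomials d i = ∅ :=
  Set.eq_empty_of_forall_notMem fun _ ha => (Finsupp.degree_mono ha.1).not_gt (ha.2 ▸ hi)

namespace HasLowerReduction

theorem map_homogeneousSubmodule (h : HasLowerReduction π w d) (i : ℕ) :
    (homogeneousSubmodule σ k i).map π.toLinearMap =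
      Submodule.span k (Set.range fun a : boxMonomials d i => π (monomial a 1)) := by
  refine le_antisymm ?_ (Submodule.span_le.mpr ?_)
  · rintro _ ⟨p, hp, rfl⟩
    rw [AlgHom.toLinearMap_apply, p.as_sum, map_sum]
    refine sum_mem fun a ha => ?_
    replace ha : a.degree = i := by
      by_contra hne
      exact mem_support_iff.mp ha (IsHomogeneous.coeff_eq_zero (φ := p) hp hne)
    rw [← mul_one (coeff a p), ← smul_eq_mul, ← smul_monomial, map_smul]
    refine Submodule.smul_mem _ _ ?_
    obtain ⟨v, hv⟩ := h.exists_isNormalForm a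
    have hπ := hv.weightedScaling_eq 1
    rw [weightedScaling_one] at hπ
    rw [hπ]
    refine sum_mem fun c _ => ?_
    by_cases hc : v c = 0
    · simp [hc]
    · exact Submodule.smul_mem _ _ (Submodule.subset_span
        ⟨⟨c, c.2, (hv.degree_eq hc).trans ha⟩, rfl⟩)
  · rintro _ ⟨a, rfl⟩
    exact ⟨_, isHomogeneous_monomial 1 a.2.2, rfl⟩

theorem finiteDimensional_map_homogeneousSubmodule (h : HasLowerReduction π w d) (i : ℕ) :
    FiniteDimensional k ((homogeneousSubmodule σ k i).map π.toLinearMap) := by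
  rw [h.map_homogeneousSubmodule]
  exact FiniteDimensional.span_of_finite k (Set.finite_range _)

theorem finrank_map_homogeneousSubmodule (h : HasLowerReduction π w d)
    (hli : LinearIndependent k fun c : Set.Iic d => π (monomial c 1)) (i : ℕ) :
    Module.finrank k ((homogeneousSubmodule σ k i).map π.toLinearMap) =
      Nat.card (boxMonomials d i) := by
  cases nonempty_fintype (boxMonomials d i)
  rw [h.map_homogeneousSubmodule, Nat.card_eq_fintype_card]
  exact finrank_span_eq_card (hli.comp (Set.inclusion fun a (ha : a ∈ boxMonomials d i) => ha.1)
    (Set.inclusion_injective _))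

end HasLowerReduction

theorem linearIndependent_coeff_sum_X_pow_mul [Fintype σ] [CharZero k] {i m : ℕ}
    (hm : 2 * i + m ≤ d.degree) :
    LinearIndependent k fun (a : boxMonomials d i) (c : Set.Iic d) =>
      coeff c ((∑ j, X j) ^ m * monomial (R := k) a.1 1) := by
  classical
  cases nonempty_fintype (boxMonomials d i)
  rw [Fintype.linearIndependent_iff]
  intro g hg a
  set f := ∑ a : boxMonomials d i, g a • monomial (R := k) a.1 1 with hf
  have hcoeff (b : σ →₀ ℕ) : coeff b f = ∑ a : boxMonomials d i, if a.1 = b then g a else 0 := by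
    simp [hf, coeff_sum, coeff_monomial]
  have hmem : f ∈ powersIdeal k d := by
    refine mem_powersIdeal_of_sum_X_pow_mul_mem hm
      (IsHomogeneous.sum _ _ _ fun a _ =>
        (homogeneousSubmodule σ k i).smul_mem (g a) (isHomogeneous_monomial 1 a.2.2))
      (mem_powersIdeal_iff.mpr fun c hc hcd => mem_support_iff.mp hc ?_)
    simpa [hf, Finset.mul_sum, coeff_sum] using congrFun hg ⟨c, hcd⟩
  have hga : coeff a.1 f = g a := by simp [hcoeff, Subtype.coe_inj]
  by_contra hne
  exact mem_powersIdeal_iff.mp hmem a (mem_support_iff.mpr (hga ▸ hne)) a.2.1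

/-- The linear form `∑ j, t ^ w j * x_j`, the image of `∑ j, x_j` under the torus action of
`weightedScaling`. -/
noncomputable def scaledLinearForm [Fintype σ] (w : σ → ℕ) (t : k) : MvPolynomial σ k :=
  ∑ j, t ^ w j • X j

theorem isHomogeneous_scaledLinearForm [Fintype σ] (w : σ → ℕ) (t : k) :
    (scaledLinearForm w t).IsHomogeneous 1 :=
  IsHomogeneous.sum _ _ _ fun j _ =>
    (homogeneousSubmodule σ k 1).smul_mem (t ^ w j) (isHomogeneous_X k j)

theorem weightedScaling_sum_X [Fintype σ] (t : k) :
    weightedScaling π w t (∑ j, X j) = π (scaledLinearForm w t) := by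
  simp [weightedScaling, scaledLinearForm]

theorem linearIndependent_weightedScaling
    (hli : LinearIndependent k fun c : Set.Iic d => π (monomial c 1)) {t : k} (ht : t ≠ 0) :
    LinearIndependent k fun c : Set.Iic d => weightedScaling π w t (monomial c 1) := by
  simp only [weightedScaling_monomial]
  exact hli.units_smul fun c => (Units.mk0 t ht) ^ Finsupp.weight w c.1

namespace HasLowerReduction

variable [Fintype σ] [CharZero k]

theorem eventually_linearIndependent (h : HasLowerReduction π w d)
    (hli : LinearIndependent k fun c : Set.Iic d => π (monomial c 1)) {i m : ℕ}
    (hm : 2 * i + m ≤ d.degree) :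
    ∀ᶠ t : k in Filter.cofinite, LinearIndependent k fun a : boxMonomials d i =>
      weightedScaling π w t ((∑ j, X j) ^ m * monomial a 1) := by
  classical
  obtain ⟨ρ, hρ₀, hρ⟩ := h.exists_linearMap_normalForm
  have h₀ := linearIndependent_coeff_sum_X_pow_mul (k := k) hm
  simp only [← hρ₀] at h₀
  filter_upwards [eventually_linearIndependent_eval _ _ h₀,
    (Set.finite_singleton (0 : k)).compl_mem_cofinite] with t ht ht₀
  have hinj := LinearMap.ker_eq_bot.mpr
    (linearIndependent_iff_injective_fintypeLinearCombination.mp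
      (linearIndependent_weightedScaling (w := w) hli ht₀))
  simpa only [Function.comp_def, Fintype.linearCombination_apply, ← hρ] using
    ht.map' (Fintype.linearCombination k _) hinj

theorem eventually_finrank_map_eq (h : HasLowerReduction π w d)
    (hli : LinearIndependent k fun c : Set.Iic d => π (monomial c 1)) {i m : ℕ}
    (hm : 2 * i + m ≤ d.degree) :
    ∀ᶠ t : k in Filter.cofinite,
      Module.finrank k (((homogeneousSubmodule σ k i).map π.toLinearMap).map
        (LinearMap.mulLeft k (π (scaledLinearForm w t)) ^ m)) =
        Module.finrank k ((homogeneousSubmodule σ k i).map π.toLinearMap) := by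
  cases nonempty_fintype (boxMonomials d i)
  have := h.finiteDimensional_map_homogeneousSubmodule i
  filter_upwards [h.eventually_linearIndependent hli hm] with t ht
  refine (Submodule.finrank_map_le _ _).antisymm ?_
  rw [h.finrank_map_homogeneousSubmodule hli, Nat.card_eq_fintype_card, ← finrank_span_eq_card ht]
  refine Submodule.finrank_mono (Submodule.span_le.mpr ?_)
  rintro _ ⟨a, rfl⟩
  refine ⟨weightedScaling π w t (monomial a 1), ?_, ?_⟩
  · rw [weightedScaling_monomial]
    exact Submodule.smul_mem _ _ ⟨_, isHomogeneous_monomial 1 a.2.2, rfl⟩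
  · simp only [LinearMap.pow_mulLeft, LinearMap.mulLeft_apply, map_mul, map_pow,
      weightedScaling_sum_X]

theorem exists_isStrongLefschetz (h : HasLowerReduction π w d)
    (hli : LinearIndependent k fun c : Set.Iic d => π (monomial c 1)) :
    ∃ t : k, IsStrongLefschetz (fun i => (homogeneousSubmodule σ k i).map π.toLinearMap)
      (LinearMap.mulLeft k (π (scaledLinearForm w t))) := by
  have hfinite : {i | 2 * i ≤ d.degree}.Finite :=
    (Set.finite_Iic d.degree).subset fun _ hi => (Nat.le_mul_of_pos_left _ two_pos).trans hi
  obtain ⟨t, ht⟩ := ((Filter.eventually_all_finite hfinite).mpr fun i hi =>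
    h.eventually_finrank_map_eq hli (m := d.degree - 2 * i) (Nat.add_sub_of_le hi).le).exists
  have := h.finiteDimensional_map_homogeneousSubmodule
  refine ⟨t, isStrongLefschetz_of_symmetric (N := d.degree) (fun i => ?_) (fun i hi => ?_)
    (fun i hi => ?_) ht⟩
  · rintro _ ⟨_, ⟨p, hp, rfl⟩, rfl⟩
    exact ⟨scaledLinearForm w t * p,
      add_comm 1 i ▸ (isHomogeneous_scaledLinearForm w t).mul hp, by simp⟩
  · simp only [h.finrank_map_homogeneousSubmodule hli, card_boxMonomials_sub hi]
  · rw [h.map_homogeneousSubmodule, boxMonomials_eq_empty hi]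
    simp

end HasLowerReduction

end Degeneration

section Coinvariants

open MvPolynomial

variable {k A : Type*} [Field k] [CommRing A] [Algebra k A] {n r : ℕ}
  {π : MvPolynomial (Fin n) k →ₐ[k] A}

/-- The exponent `j ↦ r * (n - j) - 1` of the socle monomial of the coinvariant algebra, the
variables being numbered from `0`. -/
noncomputable def staircase (n r : ℕ) : Fin n →₀ ℕ :=
  Finsupp.equivFunOnFinite.symm fun j => r * (n - j) - 1

theorem staircase_add_one (hr : 1 ≤ r) (j : Fin n) : staircase n r j + 1 = r * (n - j) :=
  Nat.sub_add_cancel (Nat.mul_pos hr (Nat.sub_pos_of_lt j.2))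

theorem sum_finsuppAntidiag_monomial_eq_zero (hπ : ∀ i < n, π (esymmPow k n r (i + 1)) = 0)
    (j : Fin n) :
    ∑ l ∈ (Finset.Iic j).finsuppAntidiag (n - j), π (monomial (r • l) 1) = 0 := by
  have hy (i : ℕ) (hi : i < Fintype.card (Fin n)) :
      ∑ t ∈ Finset.powersetCard (i + 1) Finset.univ, ∏ j ∈ t, π (X j) ^ r = 0 := by
    simpa [esymmPow] using hπ i (by simpa using hi)
  rw [← sum_finsuppAntidiag_prod_pow_eq_zero hy (s := Finset.Iic j) (u := n - j)
    (by simp only [Fintype.card_fin, Fin.card_Iic]; omega)]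
  refine Finset.sum_congr rfl fun l hl => ?_
  rw [monomial_eq, map_mul, Finsupp.prod_of_support_subset (s := Finset.Iic j)]
  · simp [pow_mul]
  · exact Finsupp.support_smul.trans (Finset.mem_finsuppAntidiag.mp hl).2
  · simp

theorem weight_val_lt_of_mem_finsuppAntidiag {j : Fin n} {u : ℕ} {l : Fin n →₀ ℕ}
    (hl : l ∈ (Finset.Iic j).finsuppAntidiag u) (hne : l ≠ Finsupp.single j u) :
    Finsupp.weight Fin.val l < u * j := by
  obtain ⟨hsum, hsupp⟩ := Finset.mem_finsuppAntidiag'.mp hl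
  have hle (i) (hi : i ∈ l.support) : i ≤ j := Finset.mem_Iic.mp (hsupp hi)
  obtain ⟨i, hi, hij⟩ : ∃ i ∈ l.support, i ≠ j := by
    by_contra! hj
    obtain ⟨m, rfl⟩ := Finsupp.support_subset_singleton'.mp fun i hi =>
      Finset.mem_singleton.mpr (hj i hi)
    exact hne (by rw [← hsum, Finsupp.sum_single_index rfl])
  rw [Finsupp.weight_apply, ← hsum, Finsupp.sum, Finsupp.sum, Finset.sum_mul]
  exact Finset.sum_lt_sum (fun i hi => Nat.mul_le_mul_left _ (hle i hi)) ⟨i, hi,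
    Nat.mul_lt_mul_of_pos_left ((hle i hi).lt_of_ne hij)
      (Nat.pos_of_ne_zero (Finsupp.mem_support_iff.mp hi))⟩

theorem smul_mem_lowerMonomials_staircase (hr : 1 ≤ r) {j : Fin n} {l : Fin n →₀ ℕ}
    (hl : l ∈ (Finset.Iic j).finsuppAntidiag (n - j)) (hne : l ≠ Finsupp.single j (n - j)) :
    r • l ∈ lowerMonomials Fin.val (staircase n r) j := by
  have hdeg : l.degree = n - j := (Finset.mem_finsuppAntidiag'.mp hl).1
  constructor
  · rw [map_nsmul, hdeg, staircase_add_one hr, smul_eq_mul]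
  · rw [map_nsmul, staircase_add_one hr, mul_assoc, smul_eq_mul]
    exact Nat.mul_lt_mul_of_pos_left (weight_val_lt_of_mem_finsuppAntidiag hl hne) hr

theorem hasLowerReduction_staircase (hr : 1 ≤ r) (hπ : ∀ i < n, π (esymmPow k n r (i + 1)) = 0) :
    HasLowerReduction π Fin.val (staircase n r) := by
  intro j
  have hj : Finsupp.single j (n - j : ℕ) ∈ (Finset.Iic j).finsuppAntidiag (n - j) :=
    Finset.mem_finsuppAntidiag'.mpr ⟨Finsupp.sum_single_index rfl,
      Finsupp.support_single_subset.trans (by simp)⟩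
  have hrel := sum_finsuppAntidiag_monomial_eq_zero hπ j
  rw [← Finset.add_sum_erase _ _ hj, Finsupp.smul_single, smul_eq_mul, ← staircase_add_one hr,
    ← X_pow_eq_monomial] at hrel
  rw [eq_neg_of_add_eq_zero_left hrel]
  refine neg_mem (sum_mem fun l hl => ?_)
  obtain ⟨hne, hl⟩ := Finset.mem_erase.mp hl
  exact Submodule.mem_map_of_mem ((monomial_mem_restrictSupport k).mpr
    (.inl (smul_mem_lowerMonomials_staircase hr hl hne)))

/-- The ideal `(e_1(r,n), …, e_n(r,n))` defining the coinvariant algebra of `G(r,1,n)`. -/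
noncomputable def coinvariantIdeal (k : Type*) [CommRing k] (n r : ℕ) :
    Ideal (MvPolynomial (Fin n) k) :=
  Ideal.span (Set.range fun i : Fin n => esymmPow k n r (i + 1))

theorem mk_esymmPow_eq_zero {i : ℕ} (hi : i < n) :
    Ideal.Quotient.mkₐ k (coinvariantIdeal k n r) (esymmPow k n r (i + 1)) = 0 :=
  Ideal.Quotient.eq_zero_iff_mem.mpr (Ideal.subset_span ⟨⟨i, hi⟩, rfl⟩)

theorem aeval_eq_zero_of_mem_coinvariantIdeal {D : Type*} [CommRing D] [Algebra k D]
    {x : Fin n → D} (hx : ∏ j, (Polynomial.X - Polynomial.C (x j ^ r)) = Polynomial.X ^ n)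
    {p : MvPolynomial (Fin n) k} (hp : p ∈ coinvariantIdeal k n r) : aeval x p = 0 := by
  suffices hle : coinvariantIdeal k n r ≤ RingHom.ker (aeval x) from hle hp
  refine Ideal.span_le.mpr ?_
  rintro _ ⟨i, rfl⟩
  simpa [esymmPow] using
    sum_powersetCard_prod_eq_zero_of_prod_X_sub_C (y := fun j => x j ^ r) (by simpa using hx)
      (i := i) (by simp)

theorem linearIndependent_mk_monomial_staircase (hr : 1 ≤ r) :
    LinearIndependent k fun c : Set.Iic (staircase n r) =>
      Ideal.Quotient.mkₐ k (coinvariantIdeal k n r) (monomial c 1) := by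
  obtain ⟨D, _, _, x, hx, hli⟩ :=
    exists_linearIndependent_prod_pow hr (Polynomial.monic_X_pow (R := k) n)
      (Polynomial.natDegree_X_pow n)
  rw [Polynomial.map_pow, Polynomial.map_X] at hx
  let φ : MvPolynomial (Fin n) k ⧸ coinvariantIdeal k n r →ₐ[k] D :=
    Ideal.Quotient.liftₐ _ (aeval x) fun p hp => aeval_eq_zero_of_mem_coinvariantIdeal hx hp
  let exponents (c : Set.Iic (staircase n r)) (j : Fin n) : Fin (r * (n - j)) :=
    ⟨c.1 j, staircase_add_one hr j ▸ Nat.lt_succ_of_le (c.2 j)⟩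
  have hinj : Function.Injective exponents := fun c c' hcc' =>
    Subtype.ext (Finsupp.ext fun j => congrArg Fin.val (congrFun hcc' j))
  have hφ (c : Set.Iic (staircase n r)) :
      φ (Ideal.Quotient.mkₐ k _ (monomial c 1)) = ∏ j, x j ^ (exponents c j : ℕ) := by
    change aeval x (monomial c.1 1) = _
    simp [exponents, aeval_monomial, Finsupp.prod_fintype]
  have hcomp := hli.comp exponents hinj
  refine .of_comp φ.toLinearMap ?_
  simpa only [Function.comp_def, AlgHom.toLinearMap_apply, hφ] using hcomp

end Coinvariants

/-- **Example (Example 3.3 / ex:SLCoin).** In characteristic `0`, the coinvariant algebra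
of the reflection group `G(r,1,n)`, namely the graded Artinian complete intersection
`C = k[x_1,…,x_n]/(e_1(r,n),…,e_n(r,n))`, is strong Lefschetz: there is a linear form
`ℓ ∈ C₁` such that every multiplication map `×ℓᵐ : Cᵢ → C_{i+m}` has maximal rank. -/
theorem coinvariant_algebra_Grn_strong_lefschetz
    (k : Type*) [Field k] [CharZero k] (r n : ℕ) (hr : 1 ≤ r) (hn : 1 ≤ n) :
    ∃ ℓ ∈ quotGrade k n (Ideal.span (Set.range fun i : Fin n => esymmPow k n r (i + 1))) 1,
      ∀ i m : ℕ,
        Module.finrank k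
          ((quotGrade k n (Ideal.span (Set.range fun i : Fin n => esymmPow k n r (i + 1))) i).map
            (LinearMap.mulLeft k (ℓ ^ m))) =
        min (Module.finrank k
            (quotGrade k n (Ideal.span (Set.range fun i : Fin n => esymmPow k n r (i + 1))) i))
          (Module.finrank k
            (quotGrade k n (Ideal.span (Set.range fun i : Fin n => esymmPow k n r (i + 1)))
              (i + m))) := by
  obtain ⟨t, ht⟩ :=
    (hasLowerReduction_staircase hr fun _ => mk_esymmPow_eq_zero).exists_isStrongLefschetz
      (linearIndependent_mk_monomial_staircase (k := k) (n := n) hr)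
  refine ⟨_, Submodule.mem_map_of_mem (isHomogeneous_scaledLinearForm Fin.val t), fun i m => ?_⟩
  rw [← LinearMap.pow_mulLeft]
  exact ht i m
end

section
/- Let k be a field of characteristic 0, R = k[x,y,z,u,v], S = R[t], and let S act on Q_S = k[X,Y,Z,U,V,T] by contraction. Let F_B = XU^2 + YUV + ZV^2, I_B = Ann_R(F_B), B = R/I_B, G = X^2·U·V + X·Y·V^2, F = T·F_B + G ∈ Q_S, A = k[t]/(t^2), and C = S/Ann_S(F). Then (I_B)^2 ∘ G = 0, C is a free extension of A with fiber B (via ι : t ↦ t and π : x_i ↦ x_i, t ↦ 0), and the Hilbert function of C is (1, 6, 10, 6, 1). -/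
set_option synthInstance.maxHeartbeats 1000000
set_option maxHeartbeats 1000000

open Classical in
/-- Contraction action of `k[x_1,…]` on `k[X_1,…]` (the two polynomial rings being
identified): determined on monomials by `x^a ∘ X^b = X^{b-a}` if `a ≤ b` componentwise,
and `0` otherwise. -/
noncomputable def contract {k : Type*} [CommRing k] {σ : Type*}
    (f F : MvPolynomial σ k) : MvPolynomial σ k :=
  ∑ b ∈ F.support, ∑ a ∈ f.support,
    if a ≤ b then
      MvPolynomial.monomial (b - a) (MvPolynomial.coeff a f * MvPolynomial.coeff b F)
    else 0

/-- The annihilator `Ann F = {f : f ∘ F = 0}` of `F` under contraction, as an ideal. -/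
noncomputable def annIdeal {k : Type*} [CommRing k] {σ : Type*}
    (F : MvPolynomial σ k) : Ideal (MvPolynomial σ k) :=
  Ideal.span {f | contract f F = 0}

/-- The Perazzo cubic `F_B = XU² + YUV + ZV²` in `k[X,Y,Z,U,V]`
(variables `x,y,z,u,v = X 0,…,X 4`). -/
noncomputable def perazzoCubic (k : Type*) [Field k] : MvPolynomial (Fin 5) k :=
  MvPolynomial.X 0 * MvPolynomial.X 3 ^ 2 +
    MvPolynomial.X 1 * MvPolynomial.X 3 * MvPolynomial.X 4 +
    MvPolynomial.X 2 * MvPolynomial.X 4 ^ 2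

/-- The quartic `G = X²UV + XYV²` in `k[X,Y,Z,U,V]`. -/
noncomputable def perazzoG (k : Type*) [Field k] : MvPolynomial (Fin 5) k :=
  MvPolynomial.X 0 ^ 2 * MvPolynomial.X 3 * MvPolynomial.X 4 +
    MvPolynomial.X 0 * MvPolynomial.X 1 * MvPolynomial.X 4 ^ 2

/-- `F = T·F_B + G ∈ k[X,Y,Z,U,V,T]` (with `T = X 5` the last variable). -/
noncomputable def perazzoF (k : Type*) [Field k] : MvPolynomial (Fin 6) k :=
  MvPolynomial.X (Fin.last 5) * MvPolynomial.rename Fin.castSucc (perazzoCubic k) +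
    MvPolynomial.rename Fin.castSucc (perazzoG k)

/-- The induced grading on the quotient `C = S/Ann_S(F)`. -/
noncomputable def perazzoCGrade (k : Type*) [Field k] (d : ℕ) :
    Submodule k (MvPolynomial (Fin 6) k ⧸ annIdeal (perazzoF k)) :=
  (MvPolynomial.homogeneousSubmodule (Fin 6) k d).map
    (Ideal.Quotient.mkₐ k (annIdeal (perazzoF k))).toLinearMap

/-!
Write `t` for the last variable and `F = T F₀ + G`. Splitting `f = f₀ + t q` with `f₀` free of
`t` gives `t f ∘ F = f₀ ∘ F₀`, so multiplication by `t` on `C = S / Ann F` and the projection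
`C → B = R / Ann F₀` have the same kernel. If moreover `Ann F₀ ∘ G ⊆ R ∘ F₀`, then every
`f₀ ∈ Ann F₀` is congruent modulo `Ann F` to a multiple of `t`, so this kernel is `t C`. An element
killed by `t` is then a multiple of `t`, which is freeness over `k[t]/(t²)`, and
`C / t C ≅ B`, `t C ≅ B(-1)` give `H_C(d + 1) = H_B(d + 1) + H_B(d)`. The inclusion also gives
`(Ann F₀)² ∘ G ⊆ Ann F₀ ∘ (R ∘ F₀) = 0`.

For the Perazzo cubic the spaces `R_1 ∘ F_B` and `R_2 ∘ F_B` have dimension `5`, so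
`H_B = (1, 5, 5, 1)`. Forms of degree at least `3` contract `G` into `Q_1 = R_2 ∘ F_B` or
`Q_0 = R_3 ∘ F_B`, so only quadrics in `Ann F_B` require a computation.
-/

open MvPolynomial Module TensorProduct

section Contraction

variable {k σ : Type*} [CommRing k]

/-- The contraction action as a `k`-algebra homomorphism into `k`-linear endomorphisms; on
monomials it is `MvPolynomial.divMonomial`. -/
noncomputable def contraction : MvPolynomial σ k →ₐ[k] End k (MvPolynomial σ k) :=
  AddMonoidAlgebra.lift k _ _
    { toFun := fun a =>
        { toFun := fun F => F.divMonomial a.toAdd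
          map_add' := fun F G => add_divMonomial F G _
          map_smul' := fun r F => by ext; simp }
      map_one' := LinearMap.ext divMonomial_zero
      map_mul' := fun a b => LinearMap.ext fun F => by
        rw [mul_comm]; exact divMonomial_add _ _ F }

lemma contraction_monomial (a : σ →₀ ℕ) (F : MvPolynomial σ k) :
    contraction (monomial a 1) F = F.divMonomial a :=
  (congrArg (fun φ : End k (MvPolynomial σ k) => φ F)
    (AddMonoidAlgebra.lift_single _ a 1)).trans (one_smul k _)

lemma coeff_contraction (f F : MvPolynomial σ k) (c : σ →₀ ℕ) :
    coeff c (contraction f F) = ∑ a ∈ f.support, coeff a f * coeff (a + c) F := by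
  conv_lhs => rw [f.as_sum]
  simp only [map_sum, LinearMap.sum_apply, coeff_sum]
  refine Finset.sum_congr rfl fun a _ => ?_
  rw [← mul_one (coeff a f), ← smul_eq_mul, ← smul_monomial, map_smul, LinearMap.smul_apply,
    contraction_monomial, coeff_smul, coeff_divMonomial, smul_eq_mul, smul_eq_mul, mul_one]

lemma contract_eq_contraction (f F : MvPolynomial σ k) : contract f F = contraction f F := by
  classical
  ext c
  simp only [contract, coeff_sum, coeff_contraction]
  rw [Finset.sum_comm]
  refine Finset.sum_congr rfl fun a _ => ?_
  rw [Finset.sum_eq_single (a + c)]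
  · rw [if_pos le_self_add, add_tsub_cancel_left, coeff_monomial, if_pos rfl]
  · intro b _ hb
    split_ifs with hab
    · rw [coeff_monomial, if_neg]
      rintro rfl
      exact hb (add_tsub_cancel_of_le hab).symm
    · exact coeff_zero c
  · intro h
    simp [notMem_support_iff.mp h]

lemma mem_annIdeal {f F : MvPolynomial σ k} : f ∈ annIdeal F ↔ contraction f F = 0 := by
  refine ⟨fun h => ?_, fun h => Ideal.subset_span ((contract_eq_contraction f F).trans h)⟩
  induction h using Submodule.span_induction with
  | mem f hf => rwa [← contract_eq_contraction]
  | zero => simp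
  | add f g _ _ hf hg => simp [hf, hg]
  | smul f g _ hg => simp [hg]

lemma annIdeal_ne_top {F : MvPolynomial σ k} (hF : F ≠ 0) : annIdeal F ≠ ⊤ := by
  rw [Ideal.ne_top_iff_one, mem_annIdeal, map_one]
  exact hF

lemma contraction_contraction (f g F : MvPolynomial σ k) :
    contraction f (contraction g F) = contraction (f * g) F := by
  rw [map_mul, End.mul_apply]

lemma contraction_C (r : k) (F : MvPolynomial σ k) : contraction (C r) F = r • F := by
  rw [← algebraMap_eq, AlgHom.commutes, Module.algebraMap_end_apply]

lemma contraction_X (i : σ) (F : MvPolynomial σ k) :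
    contraction (X i) F = F.divMonomial (Finsupp.single i 1) :=
  contraction_monomial _ F

lemma contraction_X_C (i : σ) (r : k) : contraction (X i) (C r) = 0 := by
  classical
  ext c
  have : Finsupp.single i 1 + c ≠ 0 := by simp
  rw [contraction_X, coeff_divMonomial, coeff_C, if_neg this.symm, coeff_zero]

lemma contraction_X_one (i : σ) : contraction (X i) (1 : MvPolynomial σ k) = 0 :=
  contraction_X_C i 1

lemma contraction_X_X_mul [DecidableEq σ] (i j : σ) (F : MvPolynomial σ k) :
    contraction (X i) (X j * F) = if i = j then F else X j * contraction (X i) F := by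
  rw [contraction_X, contraction_X]
  split_ifs with h
  · rw [h, X_mul_divMonomial]
  · ext c
    rw [coeff_divMonomial, coeff_X_mul', coeff_X_mul']
    have hc : j ∈ (Finsupp.single i 1 + c).support ↔ j ∈ c.support := by
      simp [h]
    simp only [hc, coeff_divMonomial]
    split_ifs with hj
    · rw [add_tsub_assoc_of_le]
      simpa [Nat.one_le_iff_ne_zero] using hj
    · rfl

lemma contraction_X_X [DecidableEq σ] (i j : σ) :
    contraction (X i) (X j : MvPolynomial σ k) = if i = j then 1 else 0 := by
  simpa [contraction_X_one] using contraction_X_X_mul i j (1 : MvPolynomial σ k)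

lemma contraction_isHomogeneous {f F : MvPolynomial σ k} {d e s : ℕ} (hf : f.IsHomogeneous d)
    (hF : F.IsHomogeneous s) (h : d + e = s) : (contraction f F).IsHomogeneous e := by
  intro c hc
  rw [coeff_contraction] at hc
  obtain ⟨a, -, ha⟩ := Finset.exists_ne_zero_of_sum_ne_zero hc
  have hfa := hf (left_ne_zero_of_mul ha)
  have hFac := hF (right_ne_zero_of_mul ha)
  rw [map_add] at hFac
  omega

lemma contraction_eq_zero_of_lt {f F : MvPolynomial σ k} {d s : ℕ} (hf : f.IsHomogeneous d)
    (hF : F.IsHomogeneous s) (h : s < d) : contraction f F = 0 := by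
  ext c
  rw [coeff_contraction, coeff_zero]
  refine Finset.sum_eq_zero fun a _ => ?_
  by_contra ha
  have hfa := hf (left_ne_zero_of_mul ha)
  have hFac := hF (right_ne_zero_of_mul ha)
  rw [map_add] at hFac
  omega

lemma homogeneousComponent_contraction {f F : MvPolynomial σ k} {d e s : ℕ}
    (hF : F.IsHomogeneous s) (h : d + e = s) :
    homogeneousComponent e (contraction f F) = contraction (homogeneousComponent d f) F := by
  conv_lhs => rw [← sum_homogeneousComponent f]
  have hterm (i : ℕ) : homogeneousComponent e (contraction (homogeneousComponent i f) F) =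
      if i = d then contraction (homogeneousComponent d f) F else 0 := by
    have hi := homogeneousComponent_isHomogeneous i f
    obtain hsi | ⟨j, rfl⟩ := (lt_or_ge s i).imp_right Nat.exists_eq_add_of_le
    · rw [contraction_eq_zero_of_lt hi hF hsi, map_zero, if_neg (by omega)]
    · rw [homogeneousComponent_of_mem (contraction_isHomogeneous hi hF rfl)]
      split_ifs with h₁ h₂ <;> first | omega | simp_all
  simp only [map_sum, LinearMap.sum_apply, hterm, Finset.sum_ite_eq', Finset.mem_range,
    ite_eq_left_iff, not_lt]
  intro hd
  rw [homogeneousComponent_eq_zero d f (by omega), map_zero, LinearMap.zero_apply]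

lemma homogeneousComponent_mem_annIdeal {f F : MvPolynomial σ k} {s : ℕ}
    (hF : F.IsHomogeneous s) (hf : f ∈ annIdeal F) (d : ℕ) :
    homogeneousComponent d f ∈ annIdeal F := by
  rw [mem_annIdeal] at hf ⊢
  obtain hd | ⟨e, rfl⟩ := (lt_or_ge s d).imp_right Nat.exists_eq_add_of_le
  · exact contraction_eq_zero_of_lt (homogeneousComponent_isHomogeneous d f) hF hd
  · rw [← homogeneousComponent_contraction hF rfl, hf, map_zero]

lemma exists_contraction_eq_of_homogeneous {F G : MvPolynomial σ k} {s : ℕ}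
    (hF : F.IsHomogeneous s)
    (h : ∀ (d : ℕ), ∀ f ∈ annIdeal F, f.IsHomogeneous d → ∃ q, contraction f G = contraction q F) :
    ∀ f ∈ annIdeal F, ∃ q, contraction f G = contraction q F := by
  intro f hf
  choose q hq using fun d => h d (homogeneousComponent d f)
    (homogeneousComponent_mem_annIdeal hF hf d) (homogeneousComponent_isHomogeneous d f)
  refine ⟨∑ d ∈ Finset.range (f.totalDegree + 1), q d, ?_⟩
  conv_lhs => rw [← sum_homogeneousComponent f]
  simp only [map_sum, LinearMap.sum_apply, hq]

lemma exists_eq_sum_smul_X_of_isHomogeneous_one [Fintype σ] {f : MvPolynomial σ k}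
    (hf : f.IsHomogeneous 1) : ∃ c : σ → k, f = ∑ i, c i • X i := by
  have hspan : f ∈ Submodule.span k (Set.range X) := by
    rw [← homogeneousSubmodule_one_eq_span_X]
    exact hf
  obtain ⟨c, hc⟩ := (Submodule.mem_span_range_iff_exists_fun k).mp hspan
  exact ⟨c, hc.symm⟩

lemma exists_eq_sum_smul_X_mul_X_of_isHomogeneous_two [Fintype σ] {f : MvPolynomial σ k}
    (hf : f.IsHomogeneous 2) : ∃ c : σ → σ → k, f = ∑ i, ∑ j, c i j • (X i * X j) := by
  have hspan : f ∈ Submodule.span k (Set.range fun ij : σ × σ => X ij.1 * X ij.2) := by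
    rw [← Set.image2_range, Set.image2_mul, ← Submodule.span_mul_span,
      ← homogeneousSubmodule_one_eq_span_X, ← sq, homogeneousSubmodule_one_pow]
    exact hf
  obtain ⟨c, hc⟩ := (Submodule.mem_span_range_iff_exists_fun k).mp hspan
  exact ⟨fun i j => c (i, j), by rw [← hc, Fintype.sum_prod_type]⟩

lemma eq_zero_of_mem_annIdeal_of_isHomogeneous_zero [NoZeroDivisors k] {f F : MvPolynomial σ k}
    (hF : F ≠ 0) (hf : f ∈ annIdeal F) (hf₀ : f.IsHomogeneous 0) : f = 0 := by
  rw [totalDegree_eq_zero_iff_eq_C.mp (Nat.le_zero.mp hf₀.totalDegree_le)] at hf ⊢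
  rw [mem_annIdeal, contraction_C] at hf
  rw [(smul_eq_zero_iff_left hF).mp hf, C_0]

lemma homogeneousComponent_X_mul (i : σ) (p : MvPolynomial σ k) (d : ℕ) :
    homogeneousComponent (d + 1) (X i * p) = X i * homogeneousComponent d p := by
  classical
  ext c
  by_cases hc : Finsupp.single i 1 ≤ c
  · obtain ⟨c, rfl⟩ := exists_add_of_le hc
    simp only [coeff_homogeneousComponent, coeff_X_mul, map_add, Finsupp.degree_single]
    simp only [add_comm 1, Nat.add_right_cancel_iff]
  · have hic : i ∉ c.support := by simpa [Nat.one_le_iff_ne_zero] using hc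
    simp only [coeff_homogeneousComponent, coeff_X_mul', if_neg hic, ite_self]

end Contraction

section Rename

variable {k σ τ : Type*} [CommRing k] {e : σ → τ}

lemma contraction_X_rename (he : Function.Injective e) (i : σ) (F : MvPolynomial σ k) :
    contraction (X (e i)) (rename e F) = rename e (contraction (X i) F) := by
  classical
  induction F using MvPolynomial.induction_on with
  | C r => rw [rename_C, contraction_X_C, contraction_X_C, map_zero]
  | add F G hF hG => simp only [map_add, hF, hG]
  | mul_X F j hF =>
    rw [mul_comm, map_mul, rename_X, contraction_X_X_mul, contraction_X_X_mul, he.eq_iff,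
      apply_ite (rename e), map_mul, rename_X, hF]

lemma contraction_rename_rename (he : Function.Injective e) (f F : MvPolynomial σ k) :
    contraction (rename e f) (rename e F) = rename e (contraction f F) := by
  induction f using MvPolynomial.induction_on generalizing F with
  | C r => rw [rename_C, contraction_C, contraction_C, map_smul]
  | add f g hf hg => simp only [map_add, LinearMap.add_apply, hf, hg]
  | mul_X f i hf =>
    rw [map_mul, rename_X, ← contraction_contraction, contraction_X_rename he, hf,
      contraction_contraction]

lemma contraction_X_rename_of_notMem_range {i : τ} (hi : i ∉ Set.range e) (F : MvPolynomial σ k) :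
    contraction (X i) (rename e F) = 0 := by
  classical
  induction F using MvPolynomial.induction_on with
  | C r => rw [rename_C, contraction_X_C]
  | add F G hF hG => simp only [map_add, hF, hG, add_zero]
  | mul_X F j hF =>
    rw [mul_comm, map_mul, rename_X, contraction_X_X_mul, if_neg (fun h => hi ⟨j, h.symm⟩), hF,
      mul_zero]

lemma contraction_rename_X_mul {i : τ} (hi : i ∉ Set.range e) (f : MvPolynomial σ k)
    (F : MvPolynomial τ k) :
    contraction (rename e f) (X i * F) = X i * contraction (rename e f) F := by
  classical
  induction f using MvPolynomial.induction_on generalizing F with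
  | C r => rw [rename_C, contraction_C, contraction_C, mul_smul_comm]
  | add f g hf hg => simp only [map_add, LinearMap.add_apply, hf, hg, mul_add]
  | mul_X f j hf =>
    rw [map_mul (rename e), rename_X, ← contraction_contraction, contraction_X_X_mul,
      if_neg (fun h => hi ⟨j, h⟩), hf, contraction_contraction]

end Rename

section LinearAlgebra

lemma finrank_map_eq_of_ker_eq {R M N N' : Type*} [Ring R] [AddCommGroup M] [AddCommGroup N]
    [AddCommGroup N'] [Module R M] [Module R N] [Module R N'] {f : M →ₗ[R] N} {g : M →ₗ[R] N'}
    (h : LinearMap.ker f = LinearMap.ker g) (p : Submodule R M) :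
    finrank R (p.map f) = finrank R (p.map g) := by
  rw [← LinearMap.range_domRestrict, ← LinearMap.range_domRestrict]
  have hker : LinearMap.ker (f.domRestrict p) = LinearMap.ker (g.domRestrict p) := by
    rw [LinearMap.ker_domRestrict, LinearMap.ker_domRestrict, h]
  exact ((f.domRestrict p).quotKerEquivRange.symm.trans
    ((Submodule.quotEquivOfEq _ _ hker).trans (g.domRestrict p).quotKerEquivRange)).finrank_eq

lemma finrank_map_add_finrank_inf_ker {K V W : Type*} [DivisionRing K] [AddCommGroup V]
    [AddCommGroup W] [Module K V] [Module K W] (f : V →ₗ[K] W) (p : Submodule K V)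
    [FiniteDimensional K p] :
    finrank K (p.map f) + finrank K (p ⊓ LinearMap.ker f : Submodule K V) = finrank K p := by
  rw [← (f.domRestrict p).finrank_range_add_finrank_ker, LinearMap.range_domRestrict,
    LinearMap.ker_domRestrict, ← Submodule.map_comap_subtype]
  exact congrArg _ (Submodule.finrank_map_subtype_eq _ _)

lemma exists_eq_one_tmul_add_tmul {K A W : Type*} [CommRing K] [CommRing A] [Algebra K A]
    [AddCommGroup W] [Module K W] {ε : A} (hA : ∀ a : A, ∃ r s : K, a = algebraMap K A r + s • ε)
    (x : A ⊗[K] W) : ∃ w w' : W, x = 1 ⊗ₜ w + ε ⊗ₜ w' := by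
  induction x with
  | zero => exact ⟨0, 0, by simp⟩
  | add x y hx hy =>
    obtain ⟨w₁, w₁', rfl⟩ := hx
    obtain ⟨w₂, w₂', rfl⟩ := hy
    exact ⟨w₁ + w₂, w₁' + w₂', by simp only [TensorProduct.tmul_add]; abel⟩
  | tmul a w =>
    obtain ⟨r, s, rfl⟩ := hA a
    exact ⟨r • w, s • w, by
      rw [TensorProduct.add_tmul, Algebra.algebraMap_eq_smul_one, TensorProduct.smul_tmul,
        TensorProduct.smul_tmul]⟩

lemma free_of_smul_eq_zero_imp {K A M : Type*} [Field K] [CommRing A] [Algebra K A]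
    [AddCommGroup M] [Module K M] [Module A M] [IsScalarTower K A M] {ε : A} (hε : ε * ε = 0)
    (hA : ∀ a : A, ∃ r s : K, a = algebraMap K A r + s • ε)
    (hM : ∀ m : M, ε • m = 0 → ∃ m', m = ε • m') : Module.Free A M := by
  let μ : M →ₗ[K] M := LinearMap.lsmul A M ε |>.restrictScalars K
  obtain ⟨W, hW⟩ := (LinearMap.range μ).exists_isCompl
  have smul_smul_eq_zero (m : M) : ε • ε • m = 0 := by rw [smul_smul, hε, zero_smul]
  have eq_zero_of_smul (w : W) (hw : ε • (w : M) = 0) : w = 0 := by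
    obtain ⟨m, hm⟩ := hM w hw
    exact Subtype.ext ((Submodule.disjoint_def.mp hW.disjoint) _ ⟨m, hm.symm⟩ w.2)
  let Φ : A ⊗[K] W →ₗ[A] M := W.subtype.liftBaseChange A
  have hΦ (w w' : W) : Φ (1 ⊗ₜ w + ε ⊗ₜ w') = w + ε • (w' : M) := by simp [Φ]
  have hinj : Function.Injective Φ := by
    rw [injective_iff_map_eq_zero]
    intro x hx
    obtain ⟨w, w', rfl⟩ := exists_eq_one_tmul_add_tmul hA x
    rw [hΦ] at hx
    have hw : w = 0 := eq_zero_of_smul w (by simpa [smul_smul_eq_zero] using congrArg (ε • ·) hx)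
    have hw' : w' = 0 := eq_zero_of_smul w' (by simpa [hw] using hx)
    simp [hw, hw']
  have hsurj : Function.Surjective Φ := by
    have exists_eq_add_smul (m : M) : ∃ w : W, ∃ m', m = w + ε • m' := by
      obtain ⟨_, ⟨m', rfl⟩, w, hw, h⟩ :=
        Submodule.mem_sup.mp (hW.sup_eq_top.symm ▸ Submodule.mem_top : m ∈ LinearMap.range μ ⊔ W)
      exact ⟨⟨w, hw⟩, m', by rw [← h, add_comm]; rfl⟩
    intro m
    obtain ⟨w, m', rfl⟩ := exists_eq_add_smul m
    obtain ⟨w', m'', rfl⟩ := exists_eq_add_smul m'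
    exact ⟨1 ⊗ₜ w + ε ⊗ₜ w', by rw [hΦ, smul_add, smul_smul_eq_zero, add_zero]⟩
  exact Module.Free.of_equiv (LinearEquiv.ofBijective Φ ⟨hinj, hsurj⟩)

lemma exists_eq_algebraMap_add_smul_mk_X {R : Type*} [CommRing R]
    (a : Polynomial R ⧸ Ideal.span {(Polynomial.X : Polynomial R) ^ 2}) :
    ∃ r s : R, a = algebraMap R _ r + s • Ideal.Quotient.mk _ Polynomial.X := by
  obtain ⟨p, rfl⟩ := Ideal.Quotient.mk_surjective a
  refine ⟨p.coeff 0, p.coeff 1, Ideal.Quotient.eq.mpr ?_⟩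
  rw [Ideal.mem_span_singleton, Polynomial.X_pow_dvd_iff]
  intro d hd
  interval_cases d <;> simp [Polynomial.coeff_X]

end LinearAlgebra

section HilbertFunction

variable {k σ : Type*}

/-- The degree `d` part of `R / Ann F`; its dimension is the value at `d` of the Hilbert
function. -/
noncomputable def quotientGrade [CommRing k] (F : MvPolynomial σ k) (d : ℕ) :
    Submodule k (MvPolynomial σ k ⧸ annIdeal F) :=
  (homogeneousSubmodule σ k d).map (Ideal.Quotient.mkₐ k (annIdeal F)).toLinearMap

/-- The space `R_d ∘ F` of contractions of `F` by forms of degree `d`. -/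
noncomputable def contractionSpace [CommRing k] (F : MvPolynomial σ k) (d : ℕ) :
    Submodule k (MvPolynomial σ k) :=
  (homogeneousSubmodule σ k d).map (contraction.toLinearMap.flip F)

lemma mem_contractionSpace [CommRing k] {F P : MvPolynomial σ k} {d : ℕ} :
    P ∈ contractionSpace F d ↔ ∃ f : MvPolynomial σ k, f.IsHomogeneous d ∧ contraction f F = P :=
  Iff.rfl

lemma finrank_quotientGrade [CommRing k] (F : MvPolynomial σ k) (d : ℕ) :
    finrank k (quotientGrade F d) = finrank k (contractionSpace F d) := by
  refine finrank_map_eq_of_ker_eq ?_ _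
  ext f
  exact Ideal.Quotient.eq_zero_iff_mem.trans mem_annIdeal

lemma quotientGrade_fg [CommRing k] [Finite σ] (F : MvPolynomial σ k) (d : ℕ) :
    (quotientGrade F d).FG :=
  (homogeneousSubmodule_fg σ k d).map _

lemma contractionSpace_le [CommRing k] {F : MvPolynomial σ k} {d e s : ℕ}
    (hF : F.IsHomogeneous s) (h : d + e = s) :
    contractionSpace F d ≤ homogeneousSubmodule σ k e := by
  intro P hP
  obtain ⟨f, hf, rfl⟩ := mem_contractionSpace.mp hP
  exact contraction_isHomogeneous hf hF h

lemma contractionSpace_one [CommRing k] (F : MvPolynomial σ k) :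
    contractionSpace F 1 = Submodule.span k (Set.range fun i => contraction (X i) F) := by
  rw [contractionSpace, homogeneousSubmodule_one_eq_span_X, Submodule.map_span, ← Set.range_comp]
  rfl

lemma contractionSpace_self [Field k] {F : MvPolynomial σ k} {s : ℕ} (hF : F.IsHomogeneous s)
    (h : F ≠ 0) : contractionSpace F s = homogeneousSubmodule σ k 0 := by
  refine le_antisymm (contractionSpace_le hF (add_zero s)) ?_
  obtain ⟨a, ha⟩ := exists_coeff_ne_zero h
  have hdeg : a.degree = s := by
    rw [Finsupp.degree_eq_weight_one]
    exact hF ha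
  have ha' : contraction (monomial a 1) F ∈ contractionSpace F s :=
    mem_contractionSpace.mpr ⟨_, isHomogeneous_monomial 1 hdeg, rfl⟩
  have hconst := totalDegree_eq_zero_iff_eq_C.mp
    (Nat.le_zero.mp (contractionSpace_le hF rfl ha').totalDegree_le)
  have hone : (1 : MvPolynomial σ k) = (coeff a F)⁻¹ • contraction (monomial a 1) F := by
    rw [hconst, contraction_monomial, coeff_divMonomial, add_zero, smul_eq_C_mul, ← C_mul,
      inv_mul_cancel₀ ha, C_1]
  rw [homogeneousSubmodule_zero, Submodule.one_eq_span, Submodule.span_singleton_le_iff_mem, hone]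
  exact Submodule.smul_mem _ _ ha'

lemma finrank_quotientGrade_zero [Field k] {F : MvPolynomial σ k} (hF : F ≠ 0) :
    finrank k (quotientGrade F 0) = 1 := by
  rw [finrank_quotientGrade, contractionSpace, homogeneousSubmodule_zero, Submodule.one_eq_span,
    Submodule.map_span, Set.image_singleton]
  exact finrank_span_singleton (by simpa using hF)

lemma finrank_quotientGrade_self [Field k] {F : MvPolynomial σ k} {s : ℕ}
    (hF : F.IsHomogeneous s) (h : F ≠ 0) : finrank k (quotientGrade F s) = 1 := by
  rw [finrank_quotientGrade, contractionSpace_self hF h, homogeneousSubmodule_zero,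
    Submodule.one_eq_span]
  exact finrank_span_singleton one_ne_zero

lemma finrank_quotientGrade_of_lt [Field k] {F : MvPolynomial σ k} {d s : ℕ}
    (hF : F.IsHomogeneous s) (h : s < d) : finrank k (quotientGrade F d) = 0 := by
  have hbot : contractionSpace F d = ⊥ := by
    rw [eq_bot_iff]
    intro P hP
    obtain ⟨f, hf, rfl⟩ := mem_contractionSpace.mp hP
    exact contraction_eq_zero_of_lt hf hF h
  rw [finrank_quotientGrade, hbot, finrank_bot]

end HilbertFunction

section DualExtension

variable {k : Type*} {n : ℕ}

/-- The map `k[x_1, …, x_n, t] → k[x_1, …, x_n]` setting the last variable to `0`. -/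
noncomputable def evalLastZero [CommRing k] :
    MvPolynomial (Fin (n + 1)) k →ₐ[k] MvPolynomial (Fin n) k :=
  aeval fun i => Fin.lastCases 0 X i

/-- The form `T * F₀ + G`, where `T` is the last of `n + 1` variables. -/
noncomputable def dualExtension [CommRing k] (F₀ G : MvPolynomial (Fin n) k) :
    MvPolynomial (Fin (n + 1)) k :=
  X (Fin.last n) * rename Fin.castSucc F₀ + rename Fin.castSucc G

lemma last_notMem_range_castSucc : Fin.last n ∉ Set.range (Fin.castSucc (n := n)) := by
  simp [Fin.range_castSucc]

section CommRing

variable [CommRing k] {F₀ G : MvPolynomial (Fin n) k}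

lemma evalLastZero_X_last : evalLastZero (X (Fin.last n) : MvPolynomial _ k) = 0 := by
  simp [evalLastZero]

lemma evalLastZero_rename (f : MvPolynomial (Fin n) k) :
    evalLastZero (rename Fin.castSucc f) = f := by
  have hX : (fun i => Fin.lastCases 0 X i) ∘ Fin.castSucc = (X : Fin n → MvPolynomial (Fin n) k) :=
    _root_.funext fun i => by simp
  rw [evalLastZero, aeval_rename, hX, aeval_X_left_apply]

lemma exists_eq_rename_add_X_last_mul (f : MvPolynomial (Fin (n + 1)) k) :
    ∃ q, f = rename Fin.castSucc (evalLastZero f) + X (Fin.last n) * q := by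
  induction f using MvPolynomial.induction_on with
  | C r => exact ⟨0, by simp [← algebraMap_eq]⟩
  | add f g hf hg =>
    obtain ⟨p, hp⟩ := hf
    obtain ⟨q, hq⟩ := hg
    refine ⟨p + q, ?_⟩
    conv_lhs => rw [hp, hq]
    simp only [map_add]
    ring
  | mul_X f i hf =>
    obtain ⟨q, hq⟩ := hf
    refine Fin.lastCases ⟨f, ?_⟩ (fun j => ⟨q * X j.castSucc, ?_⟩) i
    · rw [map_mul, evalLastZero_X_last, mul_zero, map_zero, zero_add, mul_comm]
    · have hj : evalLastZero (X j.castSucc) = (X j : MvPolynomial (Fin n) k) := by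
        simp [evalLastZero]
      conv_lhs => rw [hq]
      rw [map_mul, map_mul, hj, rename_X]
      ring

lemma evalLastZero_isHomogeneous {f : MvPolynomial (Fin (n + 1)) k} {d : ℕ}
    (hf : f.IsHomogeneous d) : (evalLastZero f).IsHomogeneous d := by
  have hX (i : Fin (n + 1)) :
      (Fin.lastCases 0 X i : MvPolynomial (Fin n) k).IsHomogeneous 1 := by
    refine Fin.lastCases ?_ (fun j => ?_) i
    · simpa using isHomogeneous_zero _ k 1
    · simpa using isHomogeneous_X k j
  exact one_mul d ▸ hf.aeval _ hX

lemma contraction_X_last_dualExtension :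
    contraction (X (Fin.last n)) (dualExtension F₀ G) = rename Fin.castSucc F₀ := by
  rw [dualExtension, map_add, contraction_X_X_mul, if_pos rfl,
    contraction_X_rename_of_notMem_range last_notMem_range_castSucc, add_zero]

lemma contraction_rename_dualExtension (f : MvPolynomial (Fin n) k) :
    contraction (rename Fin.castSucc f) (dualExtension F₀ G) =
      dualExtension (contraction f F₀) (contraction f G) := by
  rw [dualExtension, map_add, contraction_rename_X_mul last_notMem_range_castSucc,
    contraction_rename_rename (Fin.castSucc_injective n),
    contraction_rename_rename (Fin.castSucc_injective n), dualExtension]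

lemma contraction_X_last_mul_dualExtension (f : MvPolynomial (Fin (n + 1)) k) :
    contraction (X (Fin.last n) * f) (dualExtension F₀ G) =
      rename Fin.castSucc (contraction (evalLastZero f) F₀) := by
  obtain ⟨q, hq⟩ := exists_eq_rename_add_X_last_mul f
  rw [mul_comm, ← contraction_contraction, contraction_X_last_dualExtension, hq, map_add,
    LinearMap.add_apply, contraction_rename_rename (Fin.castSucc_injective n), mul_comm,
    ← contraction_contraction, contraction_X_rename_of_notMem_range last_notMem_range_castSucc,
    map_zero, add_zero, map_add, evalLastZero_rename, map_mul, mul_comm, evalLastZero_X_last,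
    zero_mul, add_zero]

lemma X_last_mul_mem_annIdeal_dualExtension {f : MvPolynomial (Fin (n + 1)) k} :
    X (Fin.last n) * f ∈ annIdeal (dualExtension F₀ G) ↔ evalLastZero f ∈ annIdeal F₀ := by
  rw [mem_annIdeal, contraction_X_last_mul_dualExtension, mem_annIdeal,
    map_eq_zero_iff _ (rename_injective _ (Fin.castSucc_injective n))]

lemma evalLastZero_mem_annIdeal {f : MvPolynomial (Fin (n + 1)) k}
    (hf : f ∈ annIdeal (dualExtension F₀ G)) : evalLastZero f ∈ annIdeal F₀ :=
  X_last_mul_mem_annIdeal_dualExtension.mp (Ideal.mul_mem_left _ _ hf)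

lemma dualExtension_ne_zero (h : F₀ ≠ 0) : dualExtension F₀ G ≠ 0 := fun h₀ => h <|
  rename_injective _ (Fin.castSucc_injective n) <| by
    rw [← contraction_X_last_dualExtension (G := G), h₀, map_zero, map_zero]

lemma dualExtension_isHomogeneous {s : ℕ} (hF₀ : F₀.IsHomogeneous s)
    (hG : G.IsHomogeneous (s + 1)) : (dualExtension F₀ G).IsHomogeneous (s + 1) :=
  (add_comm 1 s ▸ (isHomogeneous_X k _).mul hF₀.rename_isHomogeneous).add
    hG.rename_isHomogeneous

lemma exists_sub_X_last_mul_mem_annIdeal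
    (h : ∀ f ∈ annIdeal F₀, ∃ q, contraction f G = contraction q F₀)
    {f : MvPolynomial (Fin (n + 1)) k} (hf : evalLastZero f ∈ annIdeal F₀) :
    ∃ p, f - X (Fin.last n) * p ∈ annIdeal (dualExtension F₀ G) := by
  obtain ⟨p, hp⟩ := exists_eq_rename_add_X_last_mul f
  obtain ⟨q, hq⟩ := h _ hf
  refine ⟨p + rename Fin.castSucc q, ?_⟩
  have heq : f - X (Fin.last n) * (p + rename Fin.castSucc q) =
      rename Fin.castSucc (evalLastZero f) - X (Fin.last n) * rename Fin.castSucc q := by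
    conv_lhs => rw [hp]
    ring
  rw [mem_annIdeal, heq, map_sub, LinearMap.sub_apply, contraction_rename_dualExtension,
    contraction_X_last_mul_dualExtension, evalLastZero_rename, mem_annIdeal.mp hf, hq,
    dualExtension, map_zero, mul_zero, zero_add, sub_self]

lemma contract_mul_eq_zero_of_mem_annIdeal
    (h : ∀ f ∈ annIdeal F₀, ∃ q, contraction f G = contraction q F₀)
    {f g : MvPolynomial (Fin n) k} (hf : f ∈ annIdeal F₀) (hg : g ∈ annIdeal F₀) :
    contract (f * g) G = 0 := by
  obtain ⟨q, hq⟩ := h g hg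
  rw [contract_eq_contraction, ← contraction_contraction, hq, contraction_contraction, mul_comm,
    ← contraction_contraction, mem_annIdeal.mp hf, map_zero]

end CommRing

section Quotient

/-- The map `S / Ann (T * F₀ + G) → R / Ann F₀` setting the last variable to `0`; it is the
projection of the free extension onto its fiber. -/
noncomputable def fiberProjection [CommRing k] (F₀ G : MvPolynomial (Fin n) k) :
    (MvPolynomial (Fin (n + 1)) k ⧸ annIdeal (dualExtension F₀ G)) →ₐ[k]
      (MvPolynomial (Fin n) k ⧸ annIdeal F₀) :=
  Ideal.Quotient.liftₐ _ ((Ideal.Quotient.mkₐ k (annIdeal F₀)).comp evalLastZero) fun _ hf =>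
    Ideal.Quotient.eq_zero_iff_mem.mpr (evalLastZero_mem_annIdeal hf)

section CommRing

variable [CommRing k] {F₀ G : MvPolynomial (Fin n) k}

lemma fiberProjection_mk (f : MvPolynomial (Fin (n + 1)) k) :
    fiberProjection F₀ G (Ideal.Quotient.mk _ f) = Ideal.Quotient.mk _ (evalLastZero f) :=
  rfl

lemma fiberProjection_surjective : Function.Surjective (fiberProjection F₀ G) := by
  intro b
  obtain ⟨f, rfl⟩ := Ideal.Quotient.mk_surjective b
  exact ⟨Ideal.Quotient.mk _ (rename Fin.castSucc f), by
    rw [fiberProjection_mk, evalLastZero_rename]⟩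

lemma mk_X_last_mul_eq_zero_iff
    {c : MvPolynomial (Fin (n + 1)) k ⧸ annIdeal (dualExtension F₀ G)} :
    Ideal.Quotient.mk _ (X (Fin.last n)) * c = 0 ↔ fiberProjection F₀ G c = 0 := by
  obtain ⟨f, rfl⟩ := Ideal.Quotient.mk_surjective c
  rw [← map_mul, fiberProjection_mk, Ideal.Quotient.eq_zero_iff_mem,
    Ideal.Quotient.eq_zero_iff_mem, X_last_mul_mem_annIdeal_dualExtension]

lemma fiberProjection_mk_X_last_mul
    (c : MvPolynomial (Fin (n + 1)) k ⧸ annIdeal (dualExtension F₀ G)) :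
    fiberProjection F₀ G (Ideal.Quotient.mk _ (X (Fin.last n)) * c) = 0 := by
  rw [map_mul, fiberProjection_mk, evalLastZero_X_last, map_zero, zero_mul]

lemma ker_fiberProjection (h : ∀ f ∈ annIdeal F₀, ∃ q, contraction f G = contraction q F₀) :
    RingHom.ker (fiberProjection F₀ G) =
      Ideal.span {Ideal.Quotient.mk (annIdeal (dualExtension F₀ G)) (X (Fin.last n))} := by
  ext c
  rw [RingHom.mem_ker, Ideal.mem_span_singleton]
  constructor
  · intro hc
    obtain ⟨f, rfl⟩ := Ideal.Quotient.mk_surjective c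
    rw [fiberProjection_mk, Ideal.Quotient.eq_zero_iff_mem] at hc
    obtain ⟨p, hp⟩ := exists_sub_X_last_mul_mem_annIdeal h hc
    exact ⟨Ideal.Quotient.mk _ p, by rw [← map_mul, Ideal.Quotient.mk_eq_mk_iff_sub_mem]; exact hp⟩
  · rintro ⟨c, rfl⟩
    exact fiberProjection_mk_X_last_mul c

lemma mk_X_last_sq :
    Ideal.Quotient.mk (annIdeal (dualExtension F₀ G)) (X (Fin.last n)) ^ 2 = 0 := by
  rw [sq, mk_X_last_mul_eq_zero_iff, fiberProjection_mk, evalLastZero_X_last, map_zero]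

end CommRing

/-- The map `k[t]/(t²) → S / Ann (T * F₀ + G)` sending `t` to the last variable; it is the
structure map of the free extension. -/
noncomputable def baseInclusion [CommRing k] (F₀ G : MvPolynomial (Fin n) k) :
    (Polynomial k ⧸ Ideal.span {(Polynomial.X : Polynomial k) ^ 2}) →ₐ[k]
      (MvPolynomial (Fin (n + 1)) k ⧸ annIdeal (dualExtension F₀ G)) :=
  Ideal.Quotient.liftₐ _ (Polynomial.aeval (Ideal.Quotient.mk _ (X (Fin.last n)))) <| by
    simp_rw [← RingHom.mem_ker]
    refine Ideal.span_singleton_le_iff_mem _ |>.mpr ?_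
    rw [RingHom.mem_ker, map_pow, Polynomial.aeval_X, mk_X_last_sq]

lemma baseInclusion_mk [CommRing k] {F₀ G : MvPolynomial (Fin n) k} (p : Polynomial k) :
    baseInclusion F₀ G (Ideal.Quotient.mk _ p) =
      Ideal.Quotient.mk _ (Polynomial.aeval (X (Fin.last n)) p) :=
  Polynomial.aeval_algHom_apply (Ideal.Quotient.mkₐ k _) _ p

variable [Field k] {F₀ G : MvPolynomial (Fin n) k}

lemma free_baseInclusion (h : ∀ f ∈ annIdeal F₀, ∃ q, contraction f G = contraction q F₀) :
    @Module.Free (Polynomial k ⧸ Ideal.span {(Polynomial.X : Polynomial k) ^ 2})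
      (MvPolynomial (Fin (n + 1)) k ⧸ annIdeal (dualExtension F₀ G)) _ _
      (Module.compHom _ (baseInclusion F₀ G).toRingHom) := by
  let _ := Module.compHom (MvPolynomial (Fin (n + 1)) k ⧸ annIdeal (dualExtension F₀ G))
    (baseInclusion F₀ G).toRingHom
  have smul_def (a : Polynomial k ⧸ Ideal.span {(Polynomial.X : Polynomial k) ^ 2})
      (c : MvPolynomial (Fin (n + 1)) k ⧸ annIdeal (dualExtension F₀ G)) :
      a • c = baseInclusion F₀ G a * c := rfl
  have : IsScalarTower k (Polynomial k ⧸ Ideal.span {(Polynomial.X : Polynomial k) ^ 2})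
      (MvPolynomial (Fin (n + 1)) k ⧸ annIdeal (dualExtension F₀ G)) :=
    ⟨fun r a c => by rw [smul_def, smul_def, map_smul, smul_mul_assoc]⟩
  have hX : baseInclusion F₀ G (Ideal.Quotient.mk _ Polynomial.X) =
      Ideal.Quotient.mk _ (X (Fin.last n)) := by rw [baseInclusion_mk, Polynomial.aeval_X]
  refine free_of_smul_eq_zero_imp (K := k) (ε := Ideal.Quotient.mk _ Polynomial.X) ?_
    exists_eq_algebraMap_add_smul_mk_X fun c hc => ?_
  · rw [← map_mul, ← sq]
    exact Ideal.Quotient.eq_zero_iff_mem.mpr (Ideal.mem_span_singleton_self _)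
  · rw [smul_def, hX, mk_X_last_mul_eq_zero_iff] at hc
    simp_rw [smul_def, hX]
    exact Ideal.mem_span_singleton.mp (ker_fiberProjection h ▸ hc)

lemma baseInclusion_injective (hF₀ : F₀ ≠ 0)
    (h : ∀ f ∈ annIdeal F₀, ∃ q, contraction f G = contraction q F₀) :
    Function.Injective (baseInclusion F₀ G) := by
  let _ := Module.compHom (MvPolynomial (Fin (n + 1)) k ⧸ annIdeal (dualExtension F₀ G))
    (baseInclusion F₀ G).toRingHom
  have := free_baseInclusion h
  have : Nontrivial (MvPolynomial (Fin (n + 1)) k ⧸ annIdeal (dualExtension F₀ G)) :=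
    Ideal.Quotient.nontrivial_iff.mpr (annIdeal_ne_top (dualExtension_ne_zero hF₀))
  intro a b hab
  exact FaithfulSMul.eq_of_smul_eq_smul fun c => congrArg (· * c) hab

lemma map_fiberProjection_quotientGrade (d : ℕ) :
    (quotientGrade (dualExtension F₀ G) d).map (fiberProjection F₀ G).toLinearMap =
      quotientGrade F₀ d := by
  ext b
  constructor
  · rintro ⟨_, ⟨f, hf, rfl⟩, rfl⟩
    exact ⟨evalLastZero f, evalLastZero_isHomogeneous hf, rfl⟩
  · rintro ⟨f, hf, rfl⟩
    refine ⟨_, ⟨rename Fin.castSucc f, hf.rename_isHomogeneous, rfl⟩, ?_⟩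
    exact congrArg (Ideal.Quotient.mk _) (evalLastZero_rename f)

lemma quotientGrade_succ_inf_ker_fiberProjection {s : ℕ} (hF₀ : F₀.IsHomogeneous s)
    (hG : G.IsHomogeneous (s + 1))
    (h : ∀ f ∈ annIdeal F₀, ∃ q, contraction f G = contraction q F₀) (d : ℕ) :
    quotientGrade (dualExtension F₀ G) (d + 1) ⊓
        LinearMap.ker (fiberProjection F₀ G).toLinearMap =
      (quotientGrade (dualExtension F₀ G) d).map
        (LinearMap.mulLeft k (Ideal.Quotient.mk _ (X (Fin.last n)))) := by
  ext c
  constructor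
  · rintro ⟨⟨f, hf, rfl⟩, hc⟩
    obtain ⟨p, hp⟩ := exists_sub_X_last_mul_mem_annIdeal h (Ideal.Quotient.eq_zero_iff_mem.mp hc)
    refine ⟨_, ⟨homogeneousComponent d p, homogeneousComponent_isHomogeneous d p, rfl⟩, ?_⟩
    have := homogeneousComponent_mem_annIdeal (dualExtension_isHomogeneous hF₀ hG) hp (d + 1)
    rw [map_sub, homogeneousComponent_X_mul, homogeneousComponent_eq_self hf] at this
    exact (Ideal.Quotient.eq.mpr this).symm
  · rintro ⟨_, ⟨f, hf, rfl⟩, rfl⟩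
    refine ⟨⟨X (Fin.last n) * f, ?_, rfl⟩,
      fiberProjection_mk_X_last_mul (Ideal.Quotient.mk (annIdeal (dualExtension F₀ G)) f)⟩
    exact add_comm 1 d ▸ (isHomogeneous_X k _).mul hf

lemma finrank_quotientGrade_dualExtension_succ {s : ℕ} (hF₀ : F₀.IsHomogeneous s)
    (hG : G.IsHomogeneous (s + 1))
    (h : ∀ f ∈ annIdeal F₀, ∃ q, contraction f G = contraction q F₀) (d : ℕ) :
    finrank k (quotientGrade (dualExtension F₀ G) (d + 1)) =
      finrank k (quotientGrade F₀ (d + 1)) + finrank k (quotientGrade F₀ d) := by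
  have hker : LinearMap.ker (LinearMap.mulLeft k (Ideal.Quotient.mk
      (annIdeal (dualExtension F₀ G)) (X (Fin.last n)))) =
      LinearMap.ker (fiberProjection F₀ G).toLinearMap := by
    ext c
    exact mk_X_last_mul_eq_zero_iff
  have : FiniteDimensional k (quotientGrade (dualExtension F₀ G) (d + 1)) :=
    Module.Finite.of_fg (quotientGrade_fg _ _)
  rw [← finrank_map_add_finrank_inf_ker (fiberProjection F₀ G).toLinearMap,
    map_fiberProjection_quotientGrade, quotientGrade_succ_inf_ker_fiberProjection hF₀ hG h,
    finrank_map_eq_of_ker_eq hker, map_fiberProjection_quotientGrade]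

end Quotient

end DualExtension

section Perazzo

variable (k : Type*) [Field k]

lemma perazzoCubic_isHomogeneous : (perazzoCubic k).IsHomogeneous 3 :=
  (((isHomogeneous_X k 0).mul ((isHomogeneous_X k 3).pow 2)).add
    (((isHomogeneous_X k 1).mul (isHomogeneous_X k 3)).mul (isHomogeneous_X k 4))).add
    ((isHomogeneous_X k 2).mul ((isHomogeneous_X k 4).pow 2))

lemma perazzoG_isHomogeneous : (perazzoG k).IsHomogeneous 4 :=
  ((((isHomogeneous_X k 0).pow 2).mul (isHomogeneous_X k 3)).mul (isHomogeneous_X k 4)).add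
    (((isHomogeneous_X k 0).mul (isHomogeneous_X k 1)).mul ((isHomogeneous_X k 4).pow 2))

/-- Quadrics `u², uv, v², xu, zv` whose contractions of `F_B` are the variables
`X, Y, Z, U, V`. -/
noncomputable def perazzoDualQuadric : Fin 5 → MvPolynomial (Fin 5) k :=
  ![X 3 ^ 2, X 3 * X 4, X 4 ^ 2, X 0 * X 3, X 2 * X 4]

lemma perazzoDualQuadric_isHomogeneous (i : Fin 5) : (perazzoDualQuadric k i).IsHomogeneous 2 := by
  fin_cases i
  · exact (isHomogeneous_X k 3).pow 2
  · exact (isHomogeneous_X k 3).mul (isHomogeneous_X k 4)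
  · exact (isHomogeneous_X k 4).pow 2
  · exact (isHomogeneous_X k 0).mul (isHomogeneous_X k 3)
  · exact (isHomogeneous_X k 2).mul (isHomogeneous_X k 4)

lemma contraction_perazzoDualQuadric (i : Fin 5) :
    contraction (perazzoDualQuadric k i) (perazzoCubic k) = X i := by
  fin_cases i <;>
    simp [perazzoDualQuadric, perazzoCubic, sq, mul_assoc, contraction_X_X_mul, contraction_X_X]

lemma perazzoCubic_ne_zero : perazzoCubic k ≠ 0 := fun h =>
  X_ne_zero (R := k) (0 : Fin 5) (by rw [← contraction_perazzoDualQuadric, h, map_zero])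

lemma linearIndependent_contraction_X_perazzoCubic :
    LinearIndependent k fun i => contraction (X i) (perazzoCubic k) := by
  rw [Fintype.linearIndependent_iff]
  intro g hg j
  have := congrArg (contraction (perazzoDualQuadric k j)) hg
  simp only [map_sum, map_smul, contraction_contraction] at this
  simp only [mul_comm (perazzoDualQuadric k j), ← contraction_contraction,
    contraction_perazzoDualQuadric, contraction_X_X] at this
  simpa [smul_eq_C_mul] using this

lemma contractionSpace_perazzoCubic_two :
    contractionSpace (perazzoCubic k) 2 = homogeneousSubmodule (Fin 5) k 1 := by
  refine le_antisymm (contractionSpace_le (perazzoCubic_isHomogeneous k) rfl) ?_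
  rw [homogeneousSubmodule_one_eq_span_X, Submodule.span_le]
  rintro _ ⟨i, rfl⟩
  exact ⟨_, perazzoDualQuadric_isHomogeneous k i, contraction_perazzoDualQuadric k i⟩

lemma finrank_quotientGrade_perazzoCubic_one :
    finrank k (quotientGrade (perazzoCubic k) 1) = 5 := by
  rw [finrank_quotientGrade, contractionSpace_one,
    finrank_span_eq_card (linearIndependent_contraction_X_perazzoCubic k), Fintype.card_fin]

lemma finrank_quotientGrade_perazzoCubic_two :
    finrank k (quotientGrade (perazzoCubic k) 2) = 5 := by
  rw [finrank_quotientGrade, contractionSpace_perazzoCubic_two,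
    homogeneousSubmodule_one_eq_span_X, finrank_span_eq_card (linearIndependent_X _ k),
    Fintype.card_fin]

variable {k}

lemma contraction_sum_perazzoCubic (c : Fin 5 → Fin 5 → k) :
    contraction (∑ i, ∑ j, c i j • (X i * X j)) (perazzoCubic k) =
      ∑ i, ![c 3 3, c 3 4 + c 4 3, c 4 4, c 0 3 + c 3 0 + c 1 4 + c 4 1,
        c 1 3 + c 3 1 + c 2 4 + c 4 2] i • X i := by
  simp only [Fin.sum_univ_five, perazzoCubic, sq, mul_assoc, map_add, map_smul, map_mul,
    LinearMap.add_apply, LinearMap.smul_apply, End.mul_apply, contraction_X_X_mul,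
    contraction_X_X, Fin.reduceEq, reduceIte, mul_zero, mul_one, map_zero, add_zero, zero_add,
    smul_zero, Matrix.cons_val]
  module

lemma contraction_sum_perazzoG (c : Fin 5 → Fin 5 → k) :
    contraction (∑ i, ∑ j, c i j • (X i * X j)) (perazzoG k) =
      c 0 0 • (X 3 * X 4) + (c 0 1 + c 1 0) • X 4 ^ 2 +
        (c 0 4 + c 4 0) • (X 0 * X 3 + X 1 * X 4) +
        (c 0 3 + c 3 0 + c 1 4 + c 4 1) • (X 0 * X 4) + (c 3 4 + c 4 3) • X 0 ^ 2 +
        c 4 4 • (X 0 * X 1) := by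
  simp only [Fin.sum_univ_five, perazzoG, sq, mul_assoc, map_add, map_smul, map_mul,
    LinearMap.add_apply, LinearMap.smul_apply, End.mul_apply, contraction_X_X_mul,
    contraction_X_X, Fin.reduceEq, reduceIte, mul_zero, mul_one, map_zero, add_zero, zero_add,
    smul_zero]
  module

lemma eq_zero_of_mem_annIdeal_perazzoCubic_of_isHomogeneous_one {f : MvPolynomial (Fin 5) k}
    (hf : f ∈ annIdeal (perazzoCubic k)) (hf₁ : f.IsHomogeneous 1) : f = 0 := by
  obtain ⟨c, rfl⟩ := exists_eq_sum_smul_X_of_isHomogeneous_one hf₁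
  rw [mem_annIdeal] at hf
  simp only [map_sum, map_smul, LinearMap.sum_apply, LinearMap.smul_apply] at hf
  have hc := Fintype.linearIndependent_iff.mp (linearIndependent_contraction_X_perazzoCubic k) c hf
  simp [hc]

lemma exists_contraction_perazzoG_eq_of_isHomogeneous_two {f : MvPolynomial (Fin 5) k}
    (hf : f ∈ annIdeal (perazzoCubic k)) (hf₂ : f.IsHomogeneous 2) :
    ∃ q, contraction f (perazzoG k) = contraction q (perazzoCubic k) := by
  obtain ⟨c, rfl⟩ := exists_eq_sum_smul_X_mul_X_of_isHomogeneous_two hf₂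
  rw [mem_annIdeal, contraction_sum_perazzoCubic] at hf
  have hc := Fintype.linearIndependent_iff.mp (linearIndependent_X (Fin 5) k) _ hf
  have hX0X4 : c 0 3 + c 3 0 + c 1 4 + c 4 1 = 0 := hc 3
  have hX0sq : c 3 4 + c 4 3 = 0 := hc 1
  have hX0X1 : c 4 4 = 0 := hc 2
  refine ⟨c 0 0 • X 1 + (c 0 1 + c 1 0) • X 2 + (c 0 4 + c 4 0) • X 3, ?_⟩
  rw [contraction_sum_perazzoG, hX0X4, hX0sq, hX0X1]
  simp [perazzoCubic, sq, mul_assoc, contraction_X_X_mul, contraction_X_X]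

lemma exists_contraction_perazzoG_eq :
    ∀ f ∈ annIdeal (perazzoCubic k),
      ∃ q, contraction f (perazzoG k) = contraction q (perazzoCubic k) := by
  have hB := perazzoCubic_isHomogeneous k
  have hG := perazzoG_isHomogeneous k
  refine exists_contraction_eq_of_homogeneous hB fun d f hf hfd => ?_
  have exists_of_le {e : ℕ} (h : homogeneousSubmodule (Fin 5) k e ≤
      contractionSpace (perazzoCubic k) (3 - e)) (hd : d + e = 4) :
      ∃ q, contraction f (perazzoG k) = contraction q (perazzoCubic k) := by
    obtain ⟨q, -, hq⟩ := mem_contractionSpace.mp (h (contraction_isHomogeneous hfd hG hd))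
    exact ⟨q, hq.symm⟩
  have exists_of_eq_zero (h : f = 0) :
      ∃ q, contraction f (perazzoG k) = contraction q (perazzoCubic k) :=
    ⟨0, by rw [h, map_zero, LinearMap.zero_apply, LinearMap.zero_apply]⟩
  match d, hfd with
  | 0, hfd =>
    exact exists_of_eq_zero
      (eq_zero_of_mem_annIdeal_of_isHomogeneous_zero (perazzoCubic_ne_zero k) hf hfd)
  | 1, hfd =>
    exact exists_of_eq_zero (eq_zero_of_mem_annIdeal_perazzoCubic_of_isHomogeneous_one hf hfd)
  | 2, hfd => exact exists_contraction_perazzoG_eq_of_isHomogeneous_two hf hfd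
  | 3, _ => exact exists_of_le (contractionSpace_perazzoCubic_two k).ge rfl
  | 4, _ => exact exists_of_le (contractionSpace_self hB (perazzoCubic_ne_zero k)).ge rfl
  | d + 5, hfd => exact ⟨0, by
      rw [contraction_eq_zero_of_lt hfd hG (by omega), map_zero, LinearMap.zero_apply]⟩

lemma finrank_perazzoCGrade_succ (d : ℕ) :
    finrank k (perazzoCGrade k (d + 1)) =
      finrank k (quotientGrade (perazzoCubic k) (d + 1)) +
        finrank k (quotientGrade (perazzoCubic k) d) :=
  finrank_quotientGrade_dualExtension_succ (perazzoCubic_isHomogeneous k) (perazzoG_isHomogeneous k)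
    exists_contraction_perazzoG_eq d

end Perazzo

theorem perazzo_free_extension_general
    (k : Type*) [Field k] :
    (∀ f ∈ annIdeal (perazzoCubic k), ∀ g ∈ annIdeal (perazzoCubic k),
      contract (f * g) (perazzoG k) = 0) ∧
    (∃ ι : (Polynomial k ⧸ Ideal.span {(Polynomial.X : Polynomial k) ^ 2}) →+*
        (MvPolynomial (Fin 6) k ⧸ annIdeal (perazzoF k)),
      (∀ p : Polynomial k,
        ι (Ideal.Quotient.mk (Ideal.span {(Polynomial.X : Polynomial k) ^ 2}) p) =
          Ideal.Quotient.mk (annIdeal (perazzoF k))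
            (Polynomial.aeval (MvPolynomial.X (Fin.last 5) : MvPolynomial (Fin 6) k) p)) ∧
      Function.Injective ι ∧
      @Module.Free (Polynomial k ⧸ Ideal.span {(Polynomial.X : Polynomial k) ^ 2})
        (MvPolynomial (Fin 6) k ⧸ annIdeal (perazzoF k)) _ _
        (Module.compHom (MvPolynomial (Fin 6) k ⧸ annIdeal (perazzoF k)) ι)) ∧
    (∃ π : (MvPolynomial (Fin 6) k ⧸ annIdeal (perazzoF k)) →+*
        (MvPolynomial (Fin 5) k ⧸ annIdeal (perazzoCubic k)),
      (∀ f : MvPolynomial (Fin 6) k,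
        π (Ideal.Quotient.mk (annIdeal (perazzoF k)) f) =
          Ideal.Quotient.mk (annIdeal (perazzoCubic k))
            (MvPolynomial.aeval (fun i => Fin.lastCases 0 MvPolynomial.X i) f)) ∧
      Function.Surjective π ∧
      RingHom.ker π =
        Ideal.span {Ideal.Quotient.mk (annIdeal (perazzoF k))
          (MvPolynomial.X (Fin.last 5) : MvPolynomial (Fin 6) k)}) ∧
    (Module.finrank k (perazzoCGrade k 0) = 1 ∧ Module.finrank k (perazzoCGrade k 1) = 6 ∧
      Module.finrank k (perazzoCGrade k 2) = 10 ∧ Module.finrank k (perazzoCGrade k 3) = 6 ∧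
      Module.finrank k (perazzoCGrade k 4) = 1 ∧
      ∀ d : ℕ, 4 < d → Module.finrank k (perazzoCGrade k d) = 0) := by
  have h := exists_contraction_perazzoG_eq (k := k)
  have hB := perazzoCubic_isHomogeneous k
  have hB₀ := perazzoCubic_ne_zero k
  have hB₁ := finrank_quotientGrade_perazzoCubic_one k
  have hB₂ := finrank_quotientGrade_perazzoCubic_two k
  have hB₃ := finrank_quotientGrade_self hB hB₀
  have hB_lt {d : ℕ} (hd : 3 < d) := finrank_quotientGrade_of_lt hB hd
  refine ⟨fun f hf g hg => contract_mul_eq_zero_of_mem_annIdeal h hf hg,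
    ⟨(baseInclusion _ _).toRingHom, baseInclusion_mk, baseInclusion_injective hB₀ h,
      free_baseInclusion h⟩,
    ⟨(fiberProjection _ _).toRingHom, fiberProjection_mk, fiberProjection_surjective,
      ker_fiberProjection h⟩,
    finrank_quotientGrade_zero (dualExtension_ne_zero hB₀), ?_, ?_, ?_, ?_, fun d hd => ?_⟩
  · rw [finrank_perazzoCGrade_succ, hB₁, finrank_quotientGrade_zero hB₀]
  · rw [finrank_perazzoCGrade_succ, hB₂, hB₁]
  · rw [finrank_perazzoCGrade_succ, hB₃, hB₂]
  · rw [finrank_perazzoCGrade_succ, hB_lt (by norm_num), hB₃]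
  · exact finrank_quotientGrade_of_lt
      (dualExtension_isHomogeneous hB (perazzoG_isHomogeneous k)) hd

/-- **Example (Example 3.6 / SL2counterex, the free-extension structure).** For
`F_B = XU² + YUV + ZV²`, `G = X²UV + XYV²` and `F = T·F_B + G`, one has `(I_B)² ∘ G = 0`;
hence `C = S/Ann_S(F)` is a free extension of `A = k[t]/(t²)` with fiber `B = R/Ann(F_B)`
(via `ι : t ↦ t` and `π : x_i ↦ x_i, t ↦ 0`, with `ker π = ι(m_A)·C` generated by the class
of `t`), and the Hilbert function of `C` is `(1,6,10,6,1)`. -/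
theorem perazzo_free_extension
    (k : Type*) [Field k] [CharZero k] :
    (∀ f ∈ annIdeal (perazzoCubic k), ∀ g ∈ annIdeal (perazzoCubic k),
      contract (f * g) (perazzoG k) = 0) ∧
    (∃ ι : (Polynomial k ⧸ Ideal.span {(Polynomial.X : Polynomial k) ^ 2}) →+*
        (MvPolynomial (Fin 6) k ⧸ annIdeal (perazzoF k)),
      (∀ p : Polynomial k,
        ι (Ideal.Quotient.mk (Ideal.span {(Polynomial.X : Polynomial k) ^ 2}) p) =
          Ideal.Quotient.mk (annIdeal (perazzoF k))
            (Polynomial.aeval (MvPolynomial.X (Fin.last 5) : MvPolynomial (Fin 6) k) p)) ∧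
      Function.Injective ι ∧
      @Module.Free (Polynomial k ⧸ Ideal.span {(Polynomial.X : Polynomial k) ^ 2})
        (MvPolynomial (Fin 6) k ⧸ annIdeal (perazzoF k)) _ _
        (Module.compHom (MvPolynomial (Fin 6) k ⧸ annIdeal (perazzoF k)) ι)) ∧
    (∃ π : (MvPolynomial (Fin 6) k ⧸ annIdeal (perazzoF k)) →+*
        (MvPolynomial (Fin 5) k ⧸ annIdeal (perazzoCubic k)),
      (∀ f : MvPolynomial (Fin 6) k,
        π (Ideal.Quotient.mk (annIdeal (perazzoF k)) f) =
          Ideal.Quotient.mk (annIdeal (perazzoCubic k))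
            (MvPolynomial.aeval (fun i => Fin.lastCases 0 MvPolynomial.X i) f)) ∧
      Function.Surjective π ∧
      RingHom.ker π =
        Ideal.span {Ideal.Quotient.mk (annIdeal (perazzoF k))
          (MvPolynomial.X (Fin.last 5) : MvPolynomial (Fin 6) k)}) ∧
    (Module.finrank k (perazzoCGrade k 0) = 1 ∧ Module.finrank k (perazzoCGrade k 1) = 6 ∧
      Module.finrank k (perazzoCGrade k 2) = 10 ∧ Module.finrank k (perazzoCGrade k 3) = 6 ∧
      Module.finrank k (perazzoCGrade k 4) = 1 ∧
      ∀ d : ℕ, 4 < d → Module.finrank k (perazzoCGrade k d) = 0) :=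
  perazzo_free_extension_general k
end
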